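/- arXiv:2407.15506 — 3 statements merged into one kernel-verified Lean document; each statement's English description precedes it below -/
import Mathlib

section
/- Let (W,S) be a Coxeter system, let α, β be roots (half-spaces) with α ≠ ±β, and suppose the pair {α, β} is prenilpotent (i.e. α ∩ β ≠ ∅ and (−α) ∩ (−β) ≠ ∅) and the product of the reflections r_α r_β has infinite order. Then {α, β} is nested, i.e. α ⊆ β or β ⊆ α. -/
variable {B W : Type*} [Group W] {M : CoxeterMatrix B}

/-- The simple root `α_s = {w ∈ W : ℓ(sw) > ℓ(w)}`, viewed as a half-space of chambers. -/
def simpleRoot (cs : CoxeterSystem M W) (s : B) : Set W :=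
  {w : W | cs.length w < cs.length (cs.simple s * w)}

/-- `α` is a root (half-space) with associated reflection `r`: `α = v • α_s` and
`r = v s v⁻¹` for some `v ∈ W`, `s ∈ S`.  The opposite root `-α` is the complement `αᶜ`. -/
def IsRootPair (cs : CoxeterSystem M W) (α : Set W) (r : W) : Prop :=
  ∃ (v : W) (s : B), α = (v * ·) '' simpleRoot cs s ∧ r = v * cs.simple s * v⁻¹

/-!
Put `τ = r_β r_α`. The translates `τ ^ k • α` and `τ ^ k • β` form a family of roots
`H (2 * k)`, `H (2 * k + 1)` whose reflections are `t n = τ ^ n * r_α`, and `t m` maps `H n` to the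
complement of `H (2 * m - n)`. Two chambers are separated by finitely many walls, so the signs
`x ∈ H n` are eventually 2-periodic as `n → ∞`, independently of `x`, with the opposite values as
`n → -∞`. Replacing roots by their opposites, 2-periodically in `n`, we may assume that
`{n | x ∈ H n}` differs from `{n | n ≤ 0}` by a finite set; let `h x` be the signed size of this
difference. Then `h (t m x) = 2 * m - 1 - h x`, and `h` increases by one when a gallery enters a
root `H n`. As the crossing is the reflection `t n`, it takes `h` from `n - 1` to `n`. Thus
`x ∈ H n` and `n ≤ h x` always change together; as `t n` negates both, they are equivalent. So the
oriented roots form a chain.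
-/

open Filter
open scoped Pointwise

section Charge

/-- The charge of a set of integers that differs from `{n | n ≤ 0}` by a finite set: the number of
its positive elements minus the number of nonpositive integers it omits. For any other set the
sum has infinite support and its value is `0`. -/
noncomputable def charge (A : Set ℤ) : ℤ :=
  ∑ᶠ n, (A.indicator 1 n - (Set.Iic 0).indicator 1 n)

theorem hasFiniteSupport_indicator_sub_indicator {ι R : Type*} [AddGroupWithOne R] {A C : Set ι}
    (hAC : A =ᶠ[cofinite] C) :
    Function.HasFiniteSupport fun n ↦ (A.indicator 1 n - C.indicator 1 n : R) := by
  refine (eventually_cofinite.mp (eventuallyEq_set.mp hAC)).subset fun n hn hn' ↦ hn ?_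
  by_cases hC : n ∈ C <;> simp [hn', hC]

variable {A : Set ℤ}

theorem charge_insert {m : ℤ} (hA : A =ᶠ[cofinite] Set.Iic 0) (hm : m ∉ A) :
    charge (insert m A) = charge A + 1 := by
  classical
  have indicator_insert (n : ℤ) : ((insert m A).indicator 1 n - (Set.Iic 0).indicator 1 n : ℤ) =
      (A.indicator 1 n - (Set.Iic 0).indicator 1 n) + (Pi.single m 1 : ℤ → ℤ) n := by
    rcases eq_or_ne n m with rfl | hn
    · simp [hm, add_comm, sub_eq_add_neg]
    · simp [hn, Set.indicator_apply]
  have finite_single : Function.HasFiniteSupport (Pi.single m 1 : ℤ → ℤ) :=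
    (Set.finite_singleton m).subset Pi.support_single_subset
  have sum_single : ∑ᶠ n, (Pi.single m 1 : ℤ → ℤ) n = 1 := by
    rw [finsum_eq_single _ m fun n hn ↦ Pi.single_eq_of_ne hn 1, Pi.single_eq_same]
  rw [charge, finsum_congr indicator_insert,
    finsum_add_distrib (hasFiniteSupport_indicator_sub_indicator hA) finite_single, sum_single,
    charge]

theorem Iic_eventuallyEq_cofinite_Iic (a b : ℤ) : Set.Iic a =ᶠ[cofinite] Set.Iic b := by
  rw [Int.cofinite_eq]
  refine eventuallyEq_set.mpr (eventually_sup.mpr ⟨?_, ?_⟩)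
  · filter_upwards [eventually_le_atBot a, eventually_le_atBot b] with n ha hb
    exact iff_of_true ha hb
  · filter_upwards [eventually_gt_atTop a, eventually_gt_atTop b] with n ha hb
    exact iff_of_false ha.not_ge hb.not_ge

theorem charge_Iic (a : ℤ) : charge (Set.Iic a) = a := by
  have charge_Iic_eq (b : ℤ) : charge (Set.Iic b) = charge (Set.Iic (b - 1)) + 1 := by
    rw [← charge_insert (Iic_eventuallyEq_cofinite_Iic (b - 1) 0) (m := b) (by simp)]
    congr 1
    ext n
    simp only [Set.mem_Iic, Set.mem_insert_iff]
    lia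
  induction a using Int.induction_on with
  | zero => simp [charge]
  | succ a ih => rw [charge_Iic_eq, add_sub_cancel_right, ih]
  | pred a ih => linarith [charge_Iic_eq (-a)]

theorem charge_setOf_sub_notMem (hA : A =ᶠ[cofinite] Set.Iic 0) (c : ℤ) :
    charge {n | c - n ∉ A} = c - 1 - charge A := by
  classical
  have indicator_sub (n : ℤ) :
      ({n | c - n ∉ A}.indicator 1 (c - n) - (Set.Iic 0).indicator 1 (c - n) : ℤ) =
        ((Set.Iic (c - 1)).indicator 1 n - (Set.Iic 0).indicator 1 n) -
          (A.indicator 1 n - (Set.Iic 0).indicator 1 n) := by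
    simp only [Set.indicator_apply, Set.mem_ofPred_eq, Set.mem_Iic, sub_sub_cancel, Pi.one_apply]
    grind
  calc charge {n | c - n ∉ A}
      = ∑ᶠ n, ({n | c - n ∉ A}.indicator 1 (c - n) - (Set.Iic 0).indicator 1 (c - n)) :=
        (finsum_comp_equiv (Equiv.subLeft c)).symm
    _ = charge (Set.Iic (c - 1)) - charge A := by
        rw [finsum_congr indicator_sub, finsum_sub_distrib
          (hasFiniteSupport_indicator_sub_indicator (Iic_eventuallyEq_cofinite_Iic (c - 1) 0))
          (hasFiniteSupport_indicator_sub_indicator hA), charge, charge]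
    _ = c - 1 - charge A := by rw [charge_Iic]

end Charge

/-- A family of half-spaces `H n` of a connected graph on `X`, on which the reflections `t n` act
up to complementation as the infinite dihedral group acts on `ℤ`. -/
structure IsDihedralWallFamily {X : Type*} (adj : X → X → Prop) (H : ℤ → Set X)
    (t : ℤ → X → X) : Prop where
  reflection_mem_iff : ∀ m n x, t m x ∈ H n ↔ x ∉ H (2 * m - n)
  eq_reflection_of_crosses : ∀ n x y, adj x y → ¬ (x ∈ H n ↔ y ∈ H n) → y = t n x
  reflection_injective : ∀ x, Function.Injective (t · x)
  connected : ∀ x y, Relation.ReflTransGen adj x y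

section Orientation

variable {X : Type*}

/-- Whether `x₀` lies in the half-spaces `H m` with `m ≡ n` modulo `2` and `m` large. -/
def limitSide (H : ℤ → Set X) (x₀ : X) (n : ℤ) : Prop :=
  ∀ᶠ k : ℤ in atTop, x₀ ∈ H (n + 2 * k)

/-- The half-spaces `H n`, each replaced by its complement if `limitSide H x₀ n` holds. For the
families considered here, this makes `x₀` lie outside all those of large index. -/
def orient (H : ℤ → Set X) (x₀ : X) (n : ℤ) : Set X :=
  {x | ¬ (x ∈ H n ↔ limitSide H x₀ n)}

theorem orient_eq_or_eq_compl (H : ℤ → Set X) (x₀ : X) (n : ℤ) :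
    orient H x₀ n = H n ∨ orient H x₀ n = (H n)ᶜ := by
  by_cases hn : limitSide H x₀ n
  · right; ext x; simp [orient, hn]
  · left; ext x; simp [orient, hn]

theorem limitSide_add_two_mul (H : ℤ → Set X) (x₀ : X) (n j : ℤ) :
    limitSide H x₀ (n + 2 * j) ↔ limitSide H x₀ n := by
  unfold limitSide
  conv_rhs => rw [← map_add_atTop_eq j, eventually_map]
  simp only [mul_add, add_assoc, add_comm (2 * j)]

theorem limitSide_two_mul_sub (H : ℤ → Set X) (x₀ : X) (m n : ℤ) :
    limitSide H x₀ (2 * m - n) ↔ limitSide H x₀ n := by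
  rw [← limitSide_add_two_mul H x₀ n (m - n), show n + 2 * (m - n) = 2 * m - n by ring]

end Orientation

/-- The position of `x` in a family of half-spaces that contains `x` for almost all indices
`n ≤ 0` and almost no indices `n > 0`. -/
noncomputable def height {X : Type*} (H : ℤ → Set X) (x : X) : ℤ :=
  charge {n | x ∈ H n}

namespace IsDihedralWallFamily

variable {X : Type*} {adj : X → X → Prop} {H : ℤ → Set X} {t : ℤ → X → X}

theorem crossed_unique (hH : IsDihedralWallFamily adj H t) {x y : X} (hxy : adj x y) {m n : ℤ}
    (hm : ¬ (x ∈ H m ↔ y ∈ H m)) (hn : ¬ (x ∈ H n ↔ y ∈ H n)) : m = n :=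
  hH.reflection_injective x <|
    (hH.eq_reflection_of_crosses m x y hxy hm).symm.trans (hH.eq_reflection_of_crosses n x y hxy hn)

theorem eventually_mem_iff_mem (hH : IsDihedralWallFamily adj H t) (x y : X) :
    ∀ᶠ n in cofinite, (x ∈ H n ↔ y ∈ H n) := by
  induction hH.connected x y with
  | refl => exact .of_forall fun n ↦ Iff.rfl
  | @tail y z _ hyz ih =>
    have finite_crossed : {n | ¬ (y ∈ H n ↔ z ∈ H n)}.Finite :=
      Set.Subsingleton.finite fun m hm n hn ↦ hH.crossed_unique hyz hm hn
    filter_upwards [ih, eventually_cofinite.mpr finite_crossed] with n using Iff.trans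

theorem eventually_mem_iff_notMem_sub (hH : IsDihedralWallFamily adj H t) (x : X) (m : ℤ) :
    ∀ᶠ n in cofinite, (x ∈ H n ↔ x ∉ H (2 * m - n)) := by
  simpa only [hH.reflection_mem_iff] using hH.eventually_mem_iff_mem x (t m x)

theorem eventually_mem_add_two_iff_mem (hH : IsDihedralWallFamily adj H t) (x : X) :
    ∀ᶠ n in cofinite, (x ∈ H (n + 2) ↔ x ∈ H n) := by
  have shift_two := (add_left_injective (2 : ℤ)).tendsto_cofinite
  filter_upwards [hH.eventually_mem_iff_notMem_sub x 0,
    shift_two.eventually (hH.eventually_mem_iff_notMem_sub x 1)] with n h₀ h₁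
  rw [h₀, h₁, show 2 * 1 - (n + 2) = 2 * 0 - n by ring]

theorem eventually_mem_iff_limitSide_self (hH : IsDihedralWallFamily adj H t) (x : X) :
    ∀ᶠ n in atTop, (x ∈ H n ↔ limitSide H x n) := by
  have periodic := (hH.eventually_mem_add_two_iff_mem x).filter_mono
    (Int.cofinite_eq ▸ le_sup_right : atTop ≤ cofinite)
  obtain ⟨N, hN⟩ := eventually_atTop.mp periodic
  refine eventually_atTop.mpr ⟨N, fun n hn ↦ ?_⟩
  have mem_add_iff (k : ℤ) (hk : 0 ≤ k) : x ∈ H (n + 2 * k) ↔ x ∈ H n := by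
    induction k, hk using Int.leInduction with
    | base => simp
    | succ k hk ih => rw [← ih, ← hN (n + 2 * k) (by lia), mul_add, mul_one, add_assoc]
  have : ∀ᶠ k : ℤ in atTop, (x ∈ H (n + 2 * k) ↔ x ∈ H n) :=
    (eventually_ge_atTop 0).mono mem_add_iff
  rw [limitSide, eventually_congr this, eventually_const]

theorem orient_eventuallyEq_Iic (hH : IsDihedralWallFamily adj H t) (x₀ x : X) :
    {n | x ∈ orient H x₀ n} =ᶠ[cofinite] Set.Iic 0 := by
  have base : ∀ᶠ n in cofinite, (x₀ ∈ orient H x₀ n ↔ n ≤ 0) := by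
    have refl_zero := hH.eventually_mem_iff_notMem_sub x₀ 0
    have limit := hH.eventually_mem_iff_limitSide_self x₀
    rw [Int.cofinite_eq, eventually_sup] at refl_zero ⊢
    constructor
    · filter_upwards [refl_zero.1, tendsto_neg_atBot_atTop.eventually limit,
        eventually_le_atBot 0] with n hn hlim hle
      have := limitSide_two_mul_sub H x₀ 0 n
      simp_all [orient]
    · filter_upwards [limit, eventually_gt_atTop 0] with n hlim hlt
      simp [orient, hlim, hlt]
  refine eventuallyEq_set.mpr ?_
  filter_upwards [base, hH.eventually_mem_iff_mem x x₀] with n hn hx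
  simpa [orient, hx] using hn

protected theorem orient (hH : IsDihedralWallFamily adj H t) (x₀ : X) :
    IsDihedralWallFamily adj (orient H x₀) t where
  reflection_mem_iff m n x := by
    have h := hH.reflection_mem_iff m n x
    have hlim := limitSide_two_mul_sub H x₀ m n
    simp only [orient, Set.mem_ofPred_eq]
    tauto
  eq_reflection_of_crosses n x y hxy hn :=
    hH.eq_reflection_of_crosses n x y hxy fun h ↦ hn (not_congr (iff_congr h Iff.rfl))
  reflection_injective := hH.reflection_injective
  connected := hH.connected

theorem height_reflection (hH : IsDihedralWallFamily adj H t) {x : X}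
    (hx : {n | x ∈ H n} =ᶠ[cofinite] Set.Iic 0) (m : ℤ) :
    height H (t m x) = 2 * m - 1 - height H x := by
  simp only [height, hH.reflection_mem_iff, ← charge_setOf_sub_notMem hx, Set.mem_ofPred_eq]

theorem setOf_mem_eq_insert (hH : IsDihedralWallFamily adj H t) {x y : X}
    (hxy : adj x y ∨ adj y x) {m : ℤ} (hx : x ∉ H m) (hy : y ∈ H m) :
    {n | y ∈ H n} = insert m {n | x ∈ H n} := by
  ext n
  have unique : ¬ (x ∈ H n ↔ y ∈ H n) → n = m := fun hn ↦ by
    rcases hxy with hxy | hyx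
    · exact hH.crossed_unique hxy hn (by tauto)
    · exact hH.crossed_unique hyx (by tauto) (by tauto)
  rcases eq_or_ne n m with rfl | hne
  · simp [hy]
  · simp only [Set.mem_insert_iff, hne, false_or]
    tauto

theorem height_of_crosses (hH : IsDihedralWallFamily adj H t)
    (hIic : ∀ x, {n | x ∈ H n} =ᶠ[cofinite] Set.Iic 0) {x y : X}
    (hxy : adj x y ∨ adj y x) {m : ℤ} (hx : x ∉ H m) (hy : y ∈ H m) :
    height H x = m - 1 ∧ height H y = m := by
  have enter : height H y = height H x + 1 := by
    rw [height, hH.setOf_mem_eq_insert hxy hx hy, charge_insert (hIic x) hx, height]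
  have reflect : height H y = 2 * m - 1 - height H x := by
    rcases hxy with hxy | hyx
    · rw [hH.eq_reflection_of_crosses m x y hxy (by tauto), hH.height_reflection (hIic x)]
    · rw [hH.eq_reflection_of_crosses m y x hyx (by tauto), hH.height_reflection (hIic y),
        sub_sub_cancel]
  lia

theorem le_height_iff_of_not_crosses (hH : IsDihedralWallFamily adj H t)
    (hIic : ∀ x, {n | x ∈ H n} =ᶠ[cofinite] Set.Iic 0) {x y : X} (hxy : adj x y) {m : ℤ}
    (hm : x ∈ H m ↔ y ∈ H m) : m ≤ height H x ↔ m ≤ height H y := by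
  by_cases hcross : ∃ n, ¬ (x ∈ H n ↔ y ∈ H n)
  · obtain ⟨n, hn⟩ := hcross
    have hne : m ≠ n := fun h ↦ hn (h ▸ hm)
    by_cases hx : x ∈ H n
    · have := hH.height_of_crosses hIic (.inr hxy) (fun hy ↦ hn (iff_of_true hx hy)) hx
      lia
    · have := hH.height_of_crosses hIic (.inl hxy) hx (by tauto)
      lia
  · push Not at hcross
    simp only [height, hcross]

open Classical in
/-- A gallery enters `H m` exactly when its height passes from `m - 1` to `m`. -/
theorem ite_mem_sub_ite_le_height_eq (hH : IsDihedralWallFamily adj H t)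
    (hIic : ∀ x, {n | x ∈ H n} =ᶠ[cofinite] Set.Iic 0) (m : ℤ) (x y : X) :
    ((if x ∈ H m then 1 else 0) - (if m ≤ height H x then 1 else 0) : ℤ) =
      (if y ∈ H m then 1 else 0) - (if m ≤ height H y then 1 else 0) := by
  induction hH.connected x y with
  | refl => rfl
  | @tail y z _ hyz ih =>
    rw [ih]
    by_cases hm : y ∈ H m ↔ z ∈ H m
    · simp only [hm, hH.le_height_iff_of_not_crosses hIic hyz hm]
    by_cases hy : y ∈ H m
    · have hz : z ∉ H m := fun hz ↦ hm (iff_of_true hy hz)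
      obtain ⟨height_z, height_y⟩ := hH.height_of_crosses hIic (.inr hyz) hz hy
      simp [hy, hz, height_y, height_z]
    · have hz : z ∈ H m := by tauto
      obtain ⟨height_y, height_z⟩ := hH.height_of_crosses hIic (.inl hyz) hy hz
      simp [hy, hz, height_y, height_z]

theorem mem_iff_le_height (hH : IsDihedralWallFamily adj H t)
    (hIic : ∀ x, {n | x ∈ H n} =ᶠ[cofinite] Set.Iic 0) (m : ℤ) (x : X) :
    x ∈ H m ↔ m ≤ height H x := by
  have const := hH.ite_mem_sub_ite_le_height_eq hIic m x (t m x)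
  have le_reflect_iff : m ≤ 2 * m - 1 - height H x ↔ ¬ m ≤ height H x := by lia
  have two_mul_sub_self : 2 * m - m = m := by ring
  simp only [hH.reflection_mem_iff, hH.height_reflection (hIic x), two_mul_sub_self,
    le_reflect_iff] at const
  grind

theorem exists_antitone_orientation [Nonempty X] (hH : IsDihedralWallFamily adj H t) :
    ∃ K : ℤ → Set X, Antitone K ∧ ∀ n, K n = H n ∨ K n = (H n)ᶜ := by
  obtain ⟨x₀⟩ := ‹Nonempty X›
  refine ⟨orient H x₀, fun m n hmn x hx ↦ ?_, orient_eq_or_eq_compl H x₀⟩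
  have mem_iff := (hH.orient x₀).mem_iff_le_height (hH.orient_eventuallyEq_Iic x₀)
  rw [mem_iff] at hx ⊢
  exact hmn.trans hx

end IsDihedralWallFamily

section ReflectionCocycle

open Classical in
/-- The affine action of a simple reflection on functions on `W` underlying the reflection cocycle:
conjugation of the argument, followed by adding the indicator function of the simple reflection. -/
noncomputable def simpleAffineAction (cs : CoxeterSystem M W) (i : B) :
    Function.End (W → ZMod 2) :=
  fun f t ↦ f (cs.simple i * t * cs.simple i) + if t = cs.simple i then 1 else 0

open Classical in
theorem prod_map_simpleAffineAction_apply (cs : CoxeterSystem M W) (ω : List B)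
    (f : W → ZMod 2) (t : W) :
    (ω.map (simpleAffineAction cs)).prod f t =
      f ((cs.wordProd ω)⁻¹ * t * cs.wordProd ω) + ((cs.leftInvSeq ω).count t : ZMod 2) := by
  induction ω using List.reverseRecOn generalizing f with
  | nil => simp [Function.End.one_def]
  | append_singleton ω i ih =>
    have conj_eq_iff : (cs.wordProd ω)⁻¹ * (t * cs.wordProd ω) = cs.simple i ↔
        cs.wordProd ω * (cs.simple i * (cs.wordProd ω)⁻¹) = t := by
      rw [inv_mul_eq_iff_eq_mul, ← mul_assoc, mul_inv_eq_iff_eq_mul, eq_comm]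
    rw [List.map_append, List.prod_append, List.map_singleton, List.prod_singleton]
    change (ω.map (simpleAffineAction cs)).prod (simpleAffineAction cs i f) t = _
    rw [ih, ← List.concat_eq_append,
      cs.leftInvSeq_concat, cs.wordProd_concat, List.concat_eq_append, List.count_append,
      List.count_singleton]
    simp only [simpleAffineAction, conj_eq_iff, beq_iff_eq, mul_inv_rev, cs.inv_simple,
      mul_assoc]
    push_cast
    ring

theorem prod_map_alternatingWord_two_mul {ι G : Type*} [Monoid G] (g : ι → G) (i j : ι) (m : ℕ) :
    ((CoxeterSystem.alternatingWord i j (2 * m)).map g).prod = (g i * g j) ^ m := by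
  induction m with
  | zero => simp [CoxeterSystem.alternatingWord]
  | succ m ih =>
    rw [mul_add, mul_one, CoxeterSystem.alternatingWord_succ',
      CoxeterSystem.alternatingWord_succ']
    simp [ih, pow_succ', mul_assoc]

theorem drop_leftInvSeq_alternatingWord (cs : CoxeterSystem M W) (i j : B) :
    (cs.leftInvSeq (CoxeterSystem.alternatingWord i j (2 * M i j))).drop (M i j) =
      (cs.leftInvSeq (CoxeterSystem.alternatingWord i j (2 * M i j))).take (M i j) := by
  apply List.ext_getElem
  · simp [two_mul]
  · intro k hk _
    replace hk : k < M i j := by simpa [two_mul] using hk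
    have half_odd (l : ℕ) : (2 * l + 1) / 2 = l := by lia
    rw [List.getElem_drop, List.getElem_take,
      cs.getElem_leftInvSeq_alternatingWord _ _ _ _ (by lia),
      cs.getElem_leftInvSeq_alternatingWord _ _ _ _ (by lia),
      cs.prod_alternatingWord_eq_mul_pow, cs.prod_alternatingWord_eq_mul_pow,
      half_odd, half_odd, pow_add]
    simp

theorem isLiftable_simpleAffineAction (cs : CoxeterSystem M W) :
    M.IsLiftable (simpleAffineAction cs) := by
  classical
  intro i j
  have wordProd_eq_one :
      cs.wordProd (CoxeterSystem.alternatingWord i j (2 * M i j)) = 1 := by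
    rw [CoxeterSystem.wordProd, prod_map_alternatingWord_two_mul, cs.simple_mul_simple_pow]
  have count_eq_zero (t : W) : ((cs.leftInvSeq
      (CoxeterSystem.alternatingWord i j (2 * M i j))).count t : ZMod 2) = 0 := by
    rw [← List.take_append_drop (M i j) (cs.leftInvSeq _), drop_leftInvSeq_alternatingWord,
      List.count_append, Nat.cast_add, CharTwo.add_self_eq_zero]
  rw [← prod_map_alternatingWord_two_mul]
  funext f t
  rw [prod_map_simpleAffineAction_apply, wordProd_eq_one, count_eq_zero]
  simp [Function.End.one_def]

/-- The reflection cocycle: the parity of the number of times a gallery from `1` to `w` crosses the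
wall of the reflection `t`. It is obtained by letting `w` act on the zero function. -/
noncomputable def reflectionCocycle (cs : CoxeterSystem M W) (w t : W) : ZMod 2 :=
  (cs.lift ⟨simpleAffineAction cs, isLiftable_simpleAffineAction cs⟩ w) 0 t

variable (cs : CoxeterSystem M W)

open Classical in
theorem reflectionCocycle_wordProd (ω : List B) (t : W) :
    reflectionCocycle cs (cs.wordProd ω) t = (cs.leftInvSeq ω).count t := by
  have lift_wordProd : cs.lift ⟨simpleAffineAction cs, isLiftable_simpleAffineAction cs⟩
      (cs.wordProd ω) = (ω.map (simpleAffineAction cs)).prod := by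
    rw [CoxeterSystem.wordProd, map_list_prod, List.map_map]
    congr! 2
    exact funext (cs.lift_apply_simple _)
  simp [reflectionCocycle, lift_wordProd, prod_map_simpleAffineAction_apply]

theorem reflectionCocycle_simple_mul_simple (i : B) (w : W) :
    reflectionCocycle cs (cs.simple i * w) (cs.simple i) =
      reflectionCocycle cs w (cs.simple i) + 1 := by
  rw [reflectionCocycle, map_mul, cs.lift_apply_simple]
  change simpleAffineAction cs i _ _ = _
  simp [simpleAffineAction, reflectionCocycle]

theorem reflectionCocycle_mul_simple_of_ne (w : W) (i : B) {t : W}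
    (ht : w * cs.simple i * w⁻¹ ≠ t) :
    reflectionCocycle cs (w * cs.simple i) t = reflectionCocycle cs w t := by
  classical
  obtain ⟨ω, rfl⟩ := cs.wordProd_surjective w
  rw [← cs.wordProd_concat, reflectionCocycle_wordProd, reflectionCocycle_wordProd,
    cs.leftInvSeq_concat, List.concat_eq_append, List.count_append, List.count_singleton]
  simp [ht]

theorem isLeftDescent_of_reflectionCocycle_ne_zero {w : W} {i : B}
    (h : reflectionCocycle cs w (cs.simple i) ≠ 0) : cs.IsLeftDescent w i := by
  classical
  obtain ⟨ω, hω, rfl⟩ := cs.exists_isReduced w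
  have mem_leftInvSeq : cs.simple i ∈ cs.leftInvSeq ω := by
    by_contra hmem
    simp [reflectionCocycle_wordProd, List.count_eq_zero_of_not_mem hmem] at h
  exact (cs.isLeftInversion_of_mem_leftInvSeq hω mem_leftInvSeq).2

theorem mem_simpleRoot_iff_not_isLeftDescent (w : W) (i : B) :
    w ∈ simpleRoot cs i ↔ ¬ cs.IsLeftDescent w i := by
  have := cs.length_simple_mul_ne w i
  simp only [simpleRoot, Set.mem_ofPred_eq, CoxeterSystem.IsLeftDescent]
  lia

theorem simple_mul_mem_simpleRoot_iff (w : W) (i : B) :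
    cs.simple i * w ∈ simpleRoot cs i ↔ w ∉ simpleRoot cs i := by
  rw [mem_simpleRoot_iff_not_isLeftDescent, mem_simpleRoot_iff_not_isLeftDescent, not_not]
  exact cs.isLeftDescent_iff_not_isLeftDescent_mul.symm

theorem mem_simpleRoot_iff_reflectionCocycle_eq_zero (w : W) (i : B) :
    w ∈ simpleRoot cs i ↔ reflectionCocycle cs w (cs.simple i) = 0 := by
  constructor
  · rw [mem_simpleRoot_iff_not_isLeftDescent, not_imp_comm]
    exact isLeftDescent_of_reflectionCocycle_ne_zero cs
  · intro h
    rw [← not_not (a := w ∈ _), ← simple_mul_mem_simpleRoot_iff,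
      mem_simpleRoot_iff_not_isLeftDescent, not_not]
    apply isLeftDescent_of_reflectionCocycle_ne_zero
    simp [reflectionCocycle_simple_mul_simple, h]

theorem mul_simple_eq_simple_mul_of_crosses_simpleRoot {w : W} {i j : B}
    (h : ¬ (w ∈ simpleRoot cs i ↔ w * cs.simple j ∈ simpleRoot cs i)) :
    w * cs.simple j = cs.simple i * w := by
  contrapose! h
  rw [mem_simpleRoot_iff_reflectionCocycle_eq_zero, mem_simpleRoot_iff_reflectionCocycle_eq_zero,
    reflectionCocycle_mul_simple_of_ne]
  rwa [ne_eq, mul_inv_eq_iff_eq_mul]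

end ReflectionCocycle

theorem mem_image_mul_simpleRoot_iff (cs : CoxeterSystem M W) (v x : W) (s : B) :
    x ∈ (v * ·) '' simpleRoot cs s ↔ v⁻¹ * x ∈ simpleRoot cs s := by
  simp

namespace IsRootPair

variable {cs : CoxeterSystem M W} {α : Set W} {r : W}

theorem isReflection (h : IsRootPair cs α r) : cs.IsReflection r := by
  obtain ⟨v, s, -, hr⟩ := h
  exact ⟨v, s, hr⟩

theorem smul (h : IsRootPair cs α r) (g : W) : IsRootPair cs (g • α) (g * r * g⁻¹) := by
  obtain ⟨v, s, rfl, rfl⟩ := h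
  refine ⟨g * v, s, ?_, by group⟩
  rw [← Set.image_smul, Set.image_image]
  simp [mul_assoc]

theorem smul_eq_compl (h : IsRootPair cs α r) : r • α = αᶜ := by
  obtain ⟨v, s, rfl, rfl⟩ := h
  ext x
  rw [Set.mem_smul_set_iff_inv_smul_mem, Set.mem_compl_iff, mem_image_mul_simpleRoot_iff,
    mem_image_mul_simpleRoot_iff, ← simple_mul_mem_simpleRoot_iff]
  simp [mul_assoc]

theorem mul_simple_eq_of_crosses (h : IsRootPair cs α r) {x : W} {i : B}
    (hx : ¬ (x ∈ α ↔ x * cs.simple i ∈ α)) : x * cs.simple i = r * x := by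
  obtain ⟨v, s, rfl, rfl⟩ := h
  rw [mem_image_mul_simpleRoot_iff, mem_image_mul_simpleRoot_iff, ← mul_assoc] at hx
  have := mul_simple_eq_simple_mul_of_crosses_simpleRoot cs hx
  rw [mul_assoc, inv_mul_eq_iff_eq_mul] at this
  rw [this]
  group

end IsRootPair

section DihedralRoots

/-- The orbit of two roots `α`, `β` under the powers of `τ`, in the order in which their walls are
met along an axis of `τ`. -/
def interleave (τ : W) (α β : Set W) (n : ℤ) : Set W :=
  τ ^ (n / 2) • if Even n then α else β

theorem interleave_two_mul (τ : W) (α β : Set W) (k : ℤ) :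
    interleave τ α β (2 * k) = τ ^ k • α := by
  simp [interleave]

theorem interleave_two_mul_add_one (τ : W) (α β : Set W) (k : ℤ) :
    interleave τ α β (2 * k + 1) = τ ^ k • β := by
  rw [interleave, if_neg (by simp), show (2 * k + 1) / 2 = k by lia]

theorem zpow_smul_interleave (τ : W) (α β : Set W) (n k : ℤ) :
    τ ^ k • interleave τ α β n = interleave τ α β (n + 2 * k) := by
  have half_add : (n + 2 * k) / 2 = k + n / 2 := by lia
  simp [interleave, smul_smul, ← zpow_add, half_add, Int.even_add]

theorem mul_mul_zpow_of_inv_eq_self {G : Type*} [Group G] {a b : G} (ha : a⁻¹ = a) (hb : b⁻¹ = b)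
    (k : ℤ) : a * (b * a) ^ k = (b * a) ^ (-k) * a := by
  have conj_eq_inv : a * (b * a) * a⁻¹ = (b * a)⁻¹ := by
    rw [mul_inv_rev, hb, mul_assoc, mul_assoc, mul_inv_cancel, mul_one, ha]
  rw [zpow_neg, ← inv_zpow, ← conj_eq_inv, conj_zpow, inv_mul_cancel_right]

variable {cs : CoxeterSystem M W} {α β : Set W} {rα rβ : W}

theorem isRootPair_interleave (hα : IsRootPair cs α rα) (hβ : IsRootPair cs β rβ) (n : ℤ) :
    IsRootPair cs (interleave (rβ * rα) α β n) ((rβ * rα) ^ n * rα) := by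
  have conj (k : ℤ) := mul_mul_zpow_of_inv_eq_self hα.isReflection.inv hβ.isReflection.inv k
  rcases Int.even_or_odd' n with ⟨k, rfl | rfl⟩
  · rw [interleave_two_mul]
    convert hα.smul ((rβ * rα) ^ k) using 1
    rw [← zpow_neg, mul_assoc, conj, neg_neg, ← mul_assoc, ← zpow_add, two_mul]
  · rw [interleave_two_mul_add_one]
    convert hβ.smul ((rβ * rα) ^ k) using 1
    have hβ_eq : rβ = (rβ * rα) * rα := by rw [mul_assoc, hα.isReflection.mul_self, mul_one]
    calc (rβ * rα) ^ (2 * k + 1) * rα = (rβ * rα) ^ k * (rβ * rα) * ((rβ * rα) ^ (-(-k)) * rα) := by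
          rw [← mul_assoc, ← zpow_add_one, ← zpow_add]
          ring_nf
      _ = (rβ * rα) ^ k * rβ * ((rβ * rα) ^ k)⁻¹ := by
          rw [← conj, mul_assoc, ← mul_assoc (rβ * rα), ← hβ_eq, zpow_neg, mul_assoc]

theorem smul_interleave (hα : IsRootPair cs α rα) (hβ : IsRootPair cs β rβ) (m n : ℤ) :
    ((rβ * rα) ^ m * rα) • interleave (rβ * rα) α β (2 * m - n) =
      (interleave (rβ * rα) α β n)ᶜ := by
  have reflection_eq : (rβ * rα) ^ m * rα * (rβ * rα) ^ (m - n) = (rβ * rα) ^ n * rα := by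
    rw [mul_assoc, mul_mul_zpow_of_inv_eq_self hα.isReflection.inv hβ.isReflection.inv,
      ← mul_assoc, ← zpow_add, neg_sub, add_sub_cancel]
  rw [show 2 * m - n = n + 2 * (m - n) by ring, ← zpow_smul_interleave, smul_smul,
    reflection_eq, (isRootPair_interleave hα hβ n).smul_eq_compl]

theorem isDihedralWallFamily_interleave (hα : IsRootPair cs α rα) (hβ : IsRootPair cs β rβ)
    (hinf : ¬ IsOfFinOrder (rα * rβ)) :
    IsDihedralWallFamily (fun x y ↦ ∃ i, y = x * cs.simple i) (interleave (rβ * rα) α β)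
      (fun n x ↦ (rβ * rα) ^ n * rα * x) where
  reflection_mem_iff m n x := by
    rw [← Set.notMem_compl_iff, ← smul_interleave hα hβ m n]
    exact not_congr Set.smul_mem_smul_set_iff
  eq_reflection_of_crosses := by
    rintro n x _ ⟨i, rfl⟩ hn
    exact (isRootPair_interleave hα hβ n).mul_simple_eq_of_crosses hn
  reflection_injective x m n hmn := by
    have hinf' : ¬ IsOfFinOrder (rβ * rα) := by
      rwa [← isOfFinOrder_inv_iff, mul_inv_rev, hα.isReflection.inv, hβ.isReflection.inv]
    exact injective_zpow_iff_not_isOfFinOrder.mpr hinf' (mul_right_cancel (mul_right_cancel hmn))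
  connected x y := by
    suffices ∀ w, Relation.ReflTransGen (fun x y ↦ ∃ i, y = x * cs.simple i) x (x * w) by
      simpa using this (x⁻¹ * y)
    intro w
    induction w using cs.simple_induction_right with
    | one => rw [mul_one]
    | mul_simple_right w i ih => exact ih.tail ⟨i, (mul_assoc _ _ _).symm⟩

end DihedralRoots

/-- If `α ≠ ±β` are roots forming a prenilpotent pair and `r_α r_β`
has infinite order, then `{α, β}` is nested. -/
theorem stmt4 (cs : CoxeterSystem M W) (α β : Set W) (rα rβ : W)
    (hα : IsRootPair cs α rα) (hβ : IsRootPair cs β rβ)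
    (hne : α ≠ β) (hnopp : α ≠ βᶜ)
    (hpre1 : (α ∩ β).Nonempty) (hpre2 : (αᶜ ∩ βᶜ).Nonempty)
    (hinf : ¬ IsOfFinOrder (rα * rβ)) :
    α ⊆ β ∨ β ⊆ α := by
  obtain ⟨K, K_antitone, K_eq⟩ :=
    (isDihedralWallFamily_interleave hα hβ hinf).exists_antitone_orientation
  have K_zero : K 0 = α ∨ K 0 = αᶜ := by simpa [interleave] using K_eq 0
  have K_one : K 1 = β ∨ K 1 = βᶜ := by simpa [interleave] using K_eq 1
  have K_one_subset : K 1 ⊆ K 0 := K_antitone zero_le_one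
  rcases K_zero with h₀ | h₀ <;> rcases K_one with h₁ | h₁ <;> rw [h₀, h₁] at K_one_subset
  · exact .inr K_one_subset
  · obtain ⟨x, hxα, hxβ⟩ := hpre2
    exact absurd (K_one_subset hxβ) hxα
  · obtain ⟨x, hxα, hxβ⟩ := hpre1
    exact absurd hxα (K_one_subset hxβ)
  · exact .inl (Set.compl_subset_compl.mp K_one_subset)
end

section
/- Let (W,S) be a Coxeter system, let α ≠ ±β be roots with o(r_α r_β) < ∞ and γ ∈ (α, β). Then there exists a spherical rank-2 residue R with R ∈ ∂²α ∩ ∂²β ∩ ∂²γ, and both o(r_α r_γ) and o(r_β r_γ) are finite. -/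
variable {B W : Type*} [Group W] {M : CoxeterMatrix B}

/-- A spherical rank-2 residue of the chamber system `Σ(W,S)`: a coset `c⟨s,t⟩` with
`s ≠ t` and `⟨s,t⟩` finite. -/
def IsSphRank2Residue (cs : CoxeterSystem M W) (R : Set W) : Prop :=
  ∃ (c : W) (s t : B), s ≠ t ∧
    (Subgroup.closure {cs.simple s, cs.simple t} : Set W).Finite ∧
    R = (c * ·) '' (Subgroup.closure {cs.simple s, cs.simple t} : Set W)

/-- `∂²α`: the spherical rank-2 residues stabilized by the reflection `r = r_α`. -/
def res2 (cs : CoxeterSystem M W) (r : W) : Set (Set W) :=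
  {R | IsSphRank2Residue cs R ∧ (r * ·) '' R = R}

/-!
If `α ≠ ±β` and `r_α r_β` has finite order, then all four quadrants are nonempty: otherwise a power
of `r_α r_β` equal to `1` would move a half-space strictly into itself.
A minimal gallery inside `β` (respectively `-β`) from `α` to `-α` crosses the wall of `α`, so this
wall carries chambers on both sides of `β`. Any two chambers on a wall are joined by a chain of
spherical rank-2 residues stabilized by its reflection, so one residue `R` in the chain lies in
`∂²α` and is cut by `β`. Reflecting in `α`, one finds in `R` chambers of `α ∩ β` and of
`(-α) ∩ (-β)`. These are separated by `β` and by every `γ ∈ (α, β)`, and a root separating two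
chambers of a residue has its reflection in the stabilizer of the residue. Finally, two elements
stabilizing a common finite set of chambers have a product of finite order.
-/

theorem conj_pow_eq_mul_pow_iff {s x : W} (h : SemiconjBy s x⁻¹ x) (t : W) (k n : ℕ) :
    x ^ k * t * (x ^ k)⁻¹ = s * x ^ n ↔ t = s * x ^ (n + 2 * k) := by
  have hconj : x ^ k * (s * x ^ (n + 2 * k)) * (x ^ k)⁻¹ = s * x ^ n := by
    rw [← mul_assoc, ← (h.pow_right k).eq]
    group
  rw [← hconj, mul_left_inj, mul_right_inj]

section InversionParity

variable (cs : CoxeterSystem M W)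

open Classical in
/-- The permutation of `W × ZMod 2` by which `s_i` acts in the standard proof of the exchange
condition: conjugation on the first factor, with the sign flipped exactly at `s_i`. It is defined
on all of `W`, not only on the reflections. -/
noncomputable def signedConjSimple (i : B) : Equiv.Perm (W × ZMod 2) :=
  Equiv.prodShear (MulAut.conj (cs.simple i)).toEquiv
    fun t ↦ Equiv.addRight (if t = cs.simple i then 1 else 0)

open Classical in
theorem signedConjSimple_apply (i : B) (t : W) (e : ZMod 2) :
    signedConjSimple cs i (t, e) =
      (cs.simple i * t * (cs.simple i)⁻¹, e + if t = cs.simple i then 1 else 0) :=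
  rfl

open Classical in
theorem signedConjSimple_mul_apply (i j : B) (t : W) (e : ZMod 2) :
    (signedConjSimple cs i * signedConjSimple cs j) (t, e) =
      (cs.simple i * cs.simple j * t * (cs.simple i * cs.simple j)⁻¹,
        e + ((if t = cs.simple j then 1 else 0) +
          if t = cs.simple j * (cs.simple i * cs.simple j) then 1 else 0)) := by
  have second_flip : cs.simple j * t * (cs.simple j)⁻¹ = cs.simple i ↔
      t = cs.simple j * (cs.simple i * cs.simple j) := by
    rw [mul_inv_eq_iff_eq_mul, ← eq_inv_mul_iff_mul_eq, cs.inv_simple]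
  simp only [Equiv.Perm.mul_apply, signedConjSimple_apply, second_flip]
  simp only [mul_inv_rev, mul_assoc, add_assoc]

open Classical in
theorem signedConjSimple_mul_pow_apply (i j : B) (k : ℕ) (t : W) (e : ZMod 2) :
    ((signedConjSimple cs i * signedConjSimple cs j) ^ k) (t, e) =
      ((cs.simple i * cs.simple j) ^ k * t * ((cs.simple i * cs.simple j) ^ k)⁻¹,
        e + ∑ n ∈ Finset.range (2 * k),
          if t = cs.simple j * (cs.simple i * cs.simple j) ^ n then 1 else 0) := by
  have inverts : SemiconjBy (cs.simple j) (cs.simple i * cs.simple j)⁻¹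
      (cs.simple i * cs.simple j) := by
    simp [SemiconjBy, mul_assoc]
  induction k with
  | zero => simp
  | succ k ih =>
    have first_flip := conj_pow_eq_mul_pow_iff inverts t k 0
    have second_flip := conj_pow_eq_mul_pow_iff inverts t k 1
    simp only [pow_zero, mul_one, pow_one, zero_add] at first_flip second_flip
    rw [pow_succ', Equiv.Perm.mul_apply, ih, signedConjSimple_mul_apply, mul_add_one 2 k,
      Finset.sum_range_succ, Finset.sum_range_succ]
    simp only [first_flip, second_flip, add_comm 1 (2 * k), add_assoc]
    rw [pow_succ' _ k, mul_inv_rev _ (_ ^ k)]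
    simp only [mul_assoc]

theorem isLiftable_signedConjSimple : M.IsLiftable (signedConjSimple cs) := by
  classical
  intro i j
  ext1 ⟨t, e⟩
  rw [signedConjSimple_mul_pow_apply, two_mul, Finset.sum_range_add]
  simp only [pow_add, cs.simple_mul_simple_pow, one_mul]
  rw [CharTwo.add_self_eq_zero]
  simp

/-- The action of `W` on `W × ZMod 2` extending `signedConjSimple`. -/
noncomputable def signedConj : W →* Equiv.Perm (W × ZMod 2) :=
  cs.lift ⟨signedConjSimple cs, isLiftable_signedConjSimple cs⟩

/-- The parity of the number of times the wall of the reflection `t` is crossed by a gallery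
from `1` to `w⁻¹`, read off as the sign picked up by `t` under `signedConj`. -/
noncomputable def inversionParity (w t : W) : ZMod 2 :=
  (signedConj cs w (t, 0)).2

theorem signedConj_simple (i : B) : signedConj cs (cs.simple i) = signedConjSimple cs i :=
  cs.lift_apply_simple _ i

open Classical in
theorem inversionParity_simple (i : B) (t : W) :
    inversionParity cs (cs.simple i) t = if t = cs.simple i then 1 else 0 := by
  rw [inversionParity, signedConj_simple, signedConjSimple_apply, zero_add]

theorem inversionParity_one (t : W) : inversionParity cs 1 t = 0 := by
  simp [inversionParity]

theorem signedConj_apply (w t : W) (e : ZMod 2) :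
    signedConj cs w (t, e) = (w * t * w⁻¹, e + inversionParity cs w t) := by
  induction w using cs.simple_induction_left generalizing e with
  | one => simp [inversionParity]
  | mul_simple_left w i ih =>
    rw [inversionParity, map_mul, Equiv.Perm.mul_apply, Equiv.Perm.mul_apply, ih, ih,
      signedConj_simple, signedConjSimple_apply, signedConjSimple_apply]
    simp only [zero_add, mul_inv_rev, mul_assoc, add_assoc]

theorem inversionParity_mul (w₁ w₂ t : W) :
    inversionParity cs (w₁ * w₂) t =
      inversionParity cs w₂ t + inversionParity cs w₁ (w₂ * t * w₂⁻¹) := by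
  rw [inversionParity, map_mul, Equiv.Perm.mul_apply, signedConj_apply cs w₂, signedConj_apply,
    zero_add]

end InversionParity

/-- `α` is a half-space of the chamber system with reflection `r`: the involution `r` exchanges
`α` with its complement, and it also exchanges any two adjacent chambers `c`, `c * s` separated
by `α`. Every root is of this kind, see `IsRootPair.isHalfSpace`. -/
structure IsHalfSpace (cs : CoxeterSystem M W) (α : Set W) (r : W) : Prop where
  mul_self : r * r = 1
  mul_mem_iff : ∀ c, r * c ∈ α ↔ c ∉ α
  mul_eq_mul_simple : ∀ c s, c ∈ α → c * cs.simple s ∉ α → r * c = c * cs.simple s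

section HalfSpaces

variable {cs : CoxeterSystem M W} {α β : Set W} {r rα rβ : W}

namespace IsHalfSpace

theorem compl (h : IsHalfSpace cs α r) : IsHalfSpace cs αᶜ r where
  mul_self := h.mul_self
  mul_mem_iff c := not_congr (h.mul_mem_iff c)
  mul_eq_mul_simple c s hc hcs := by
    have := h.mul_eq_mul_simple (c * cs.simple s) s (not_not.1 hcs)
      (by rwa [cs.simple_mul_simple_cancel_right])
    rwa [← mul_assoc, mul_left_inj] at this

theorem image_mul_left (h : IsHalfSpace cs α r) (v : W) :
    IsHalfSpace cs ((v * ·) '' α) (v * r * v⁻¹) where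
  mul_self := by
    rw [conj_mul, h.mul_self, mul_one, mul_inv_cancel]
  mul_mem_iff c := by
    simpa [Set.image_mul_left, mul_assoc] using h.mul_mem_iff (v⁻¹ * c)
  mul_eq_mul_simple c s hc hcs := by
    rw [Set.image_mul_left, Set.mem_preimage] at hc hcs
    rw [mul_assoc, mul_assoc, h.mul_eq_mul_simple _ s hc (by rwa [mul_assoc])]
    group

theorem exists_crossing (h : IsHalfSpace cs α r) {ω : List B} {c : W} (hc : c ∈ α)
    (hcω : c * cs.wordProd ω ∉ α) :
    ∃ ω₁ t ω₂, ω = ω₁ ++ t :: ω₂ ∧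
      r * (c * cs.wordProd ω₁) = c * cs.wordProd ω₁ * cs.simple t := by
  induction ω generalizing c with
  | nil => simp [hc] at hcω
  | cons i ω ih =>
    rw [cs.wordProd_cons, ← mul_assoc] at hcω
    by_cases hci : c * cs.simple i ∈ α
    · obtain ⟨ω₁, t, ω₂, rfl, hcross⟩ := ih hci hcω
      exact ⟨i :: ω₁, t, ω₂, rfl, by rwa [cs.wordProd_cons, ← mul_assoc c]⟩
    · exact ⟨[], i, ω, rfl, by simpa using h.mul_eq_mul_simple c i hc hci⟩

theorem length_inv_mul_reflection_lt (h : IsHalfSpace cs α r) {c x : W} (hc : c ∈ α)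
    (hx : x ∉ α) : cs.length (c⁻¹ * (r * x)) < cs.length (c⁻¹ * x) := by
  obtain ⟨ω, hω, hx_eq⟩ := cs.exists_isReduced (c⁻¹ * x)
  rw [inv_mul_eq_iff_eq_mul] at hx_eq
  subst hx_eq
  obtain ⟨ω₁, t, ω₂, rfl, hcross⟩ := h.exists_crossing hc hx
  have hfold : c⁻¹ * (r * (c * cs.wordProd (ω₁ ++ t :: ω₂))) = cs.wordProd (ω₁ ++ ω₂) := by
    rw [cs.wordProd_append, ← mul_assoc c, ← mul_assoc r, hcross, cs.wordProd_append,
      cs.wordProd_cons]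
    simp [mul_assoc]
  rw [hfold, inv_mul_cancel_left, hω.eq]
  calc cs.length (cs.wordProd (ω₁ ++ ω₂)) ≤ (ω₁ ++ ω₂).length := cs.length_wordProd_le _
    _ < (ω₁ ++ t :: ω₂).length := by simp

/-- Half-spaces are convex: folding a minimal gallery that leaves `α` and returns would shorten
it. -/
theorem mul_wordProd_mem_of_isReduced (h : IsHalfSpace cs α r) {c : W} {ω₁ ω₂ : List B}
    (hω : cs.IsReduced (ω₁ ++ ω₂)) (hc : c ∈ α) (hcω : c * cs.wordProd (ω₁ ++ ω₂) ∈ α) :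
    c * cs.wordProd ω₁ ∈ α := by
  by_contra he
  set e := c * cs.wordProd ω₁ with he_def
  set d := c * cs.wordProd (ω₁ ++ ω₂) with hd_def
  have hce : cs.length (c⁻¹ * (r * e)) < ω₁.length := by
    refine (h.length_inv_mul_reflection_lt hc he).trans_le ?_
    simpa [he_def] using cs.length_wordProd_le ω₁
  have hde : cs.length (d⁻¹ * (r * e)) < ω₂.length := by
    refine (h.length_inv_mul_reflection_lt hcω he).trans_le ?_
    simpa [he_def, hd_def, cs.wordProd_append, mul_assoc] using cs.length_wordProd_le ω₂
  have hcd := cs.length_mul_le (c⁻¹ * (r * e)) (d⁻¹ * (r * e))⁻¹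
  rw [cs.length_inv, show c⁻¹ * (r * e) * (d⁻¹ * (r * e))⁻¹ = c⁻¹ * d by group, hd_def,
    inv_mul_cancel_left, hω.eq, List.length_append] at hcd
  lia

theorem eq_simpleRoot {s : B} (h : IsHalfSpace cs α (cs.simple s)) (h1 : 1 ∈ α) :
    α = simpleRoot cs s := by
  ext w
  by_cases hw : w ∈ α
  · have := h.length_inv_mul_reflection_lt h1 ((h.compl.mul_mem_iff w).2 (not_not.2 hw))
    simpa [simpleRoot, hw] using this
  · have := h.length_inv_mul_reflection_lt h1 hw
    simpa [simpleRoot, hw] using this.le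

/-- Iterating `rα * rβ`, which maps the complement of `β` into that of `α`, reaches the
identity. -/
theorem eq_of_subset_of_isOfFinOrder (hα : IsHalfSpace cs α rα) (hβ : IsHalfSpace cs β rβ)
    (hfin : IsOfFinOrder (rα * rβ)) (hβα : β ⊆ α) : β = α := by
  have hstep : ∀ c ∉ β, rα * rβ * c ∉ α := fun c hc h ↦ by
    rw [mul_assoc] at h
    exact (hα.mul_mem_iff _).1 h (hβα ((hβ.mul_mem_iff c).2 hc))
  have hpow : ∀ n, ∀ c ∉ β, (rα * rβ) ^ n * c ∉ β := fun n c hc ↦ by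
    induction n with
    | zero => simpa using hc
    | succ n ih =>
      rw [pow_succ', mul_assoc]
      exact fun h ↦ hstep _ ih (hβα h)
  obtain ⟨n, hn, hone⟩ := isOfFinOrder_iff_pow_eq_one.1 hfin
  obtain ⟨m, rfl⟩ := Nat.exists_eq_add_of_lt hn
  refine hβα.antisymm fun c hcα ↦ by_contra fun hcβ ↦ hstep _ (hpow m c hcβ) ?_
  rwa [← mul_assoc, ← pow_succ', ← zero_add m, hone, one_mul]

end IsHalfSpace

theorem isHalfSpace_inversionParity_eq_zero (s : B) :
    IsHalfSpace cs {w | inversionParity cs w⁻¹ (cs.simple s) = 0} (cs.simple s) where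
  mul_self := cs.simple_mul_simple_self s
  mul_mem_iff c := by
    have add_one_eq_zero : ∀ e : ZMod 2, 1 + e = 0 ↔ ¬ e = 0 := by decide
    simp [inversionParity_mul, inversionParity_simple, add_one_eq_zero]
  mul_eq_mul_simple c t hc hct := by
    rw [Set.mem_ofPred_eq] at hc
    by_contra hne
    refine hct ?_
    rw [Set.mem_ofPred_eq, mul_inv_rev, cs.inv_simple, inversionParity_mul, hc, zero_add,
      inversionParity_simple, if_neg]
    intro hconj
    exact hne (by rw [← hconj]; group)

theorem isHalfSpace_simpleRoot (s : B) : IsHalfSpace cs (simpleRoot cs s) (cs.simple s) := by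
  have h := isHalfSpace_inversionParity_eq_zero (cs := cs) s
  rwa [h.eq_simpleRoot (by simp [inversionParity_one])] at h

theorem IsRootPair.isHalfSpace (h : IsRootPair cs α r) : IsHalfSpace cs α r := by
  obtain ⟨v, s, rfl, rfl⟩ := h
  exact (isHalfSpace_simpleRoot s).image_mul_left v

theorem exists_exchange {ω : List B} {i : B} (h : cs.IsLeftDescent (cs.wordProd ω) i) :
    ∃ ω₁ t ω₂, ω = ω₁ ++ t :: ω₂ ∧ cs.simple i * cs.wordProd ω₁ = cs.wordProd ω₁ * cs.simple t := by
  have hone : 1 ∈ simpleRoot cs i := by simp [simpleRoot]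
  have hω : 1 * cs.wordProd ω ∉ simpleRoot cs i := by
    rw [one_mul]
    exact h.not_gt
  simpa only [one_mul] using (isHalfSpace_simpleRoot i).exists_crossing hone hω

theorem simple_mul_wordProd_append_cons {ω₁ ω₂ : List B} {i t : B}
    (h : cs.simple i * cs.wordProd ω₁ = cs.wordProd ω₁ * cs.simple t) :
    cs.simple i * cs.wordProd (ω₁ ++ t :: ω₂) = cs.wordProd (ω₁ ++ ω₂) := by
  rw [cs.wordProd_append, ← mul_assoc, h, cs.wordProd_cons, cs.wordProd_append, mul_assoc,
    cs.simple_mul_simple_cancel_left]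

theorem exists_exchange_append {ω ω' : List B} {i : B} (hω : cs.IsReduced (i :: ω))
    (h : cs.IsLeftDescent (cs.wordProd (ω ++ ω')) i) :
    ∃ ω'' : List B, ω''.length + 1 = ω'.length ∧
      cs.simple i * cs.wordProd (ω ++ ω') = cs.wordProd (ω ++ ω'') := by
  obtain ⟨ω₁, t, ω₂, happ, hswap⟩ := exists_exchange h
  rcases List.append_eq_append_iff.1 happ with ⟨ρ, rfl, rfl⟩ | ⟨ρ, rfl, hρ⟩
  · refine ⟨ρ ++ ω₂, by simp only [List.length_append, List.length_cons]; lia, ?_⟩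
    rw [← List.append_assoc, simple_mul_wordProd_append_cons hswap, List.append_assoc]
  · rcases ρ with - | ⟨u, ρ⟩
    · obtain rfl : t :: ω₂ = ω' := hρ
      refine ⟨ω₂, rfl, ?_⟩
      rw [List.append_nil, simple_mul_wordProd_append_cons hswap]
    · obtain ⟨rfl, rfl⟩ := List.cons_eq_cons.1 hρ
      have hshort := cs.length_wordProd_le (ω₁ ++ ρ)
      rw [← simple_mul_wordProd_append_cons hswap, ← cs.wordProd_cons, hω.eq] at hshort
      simp at hshort

section StandardParabolic

/-- The standard parabolic subgroup `W_J` generated by the simple reflections in `J`. -/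
def standardParabolic (cs : CoxeterSystem M W) (J : Set B) : Subgroup W :=
  Subgroup.closure (cs.simple '' J)

variable {J : Set B}

theorem standardParabolic_pair (s t : B) :
    standardParabolic cs {s, t} = Subgroup.closure {cs.simple s, cs.simple t} := by
  rw [standardParabolic, Set.image_pair]

theorem simple_mem_standardParabolic {j : B} (hj : j ∈ J) :
    cs.simple j ∈ standardParabolic cs J :=
  Subgroup.subset_closure (Set.mem_image_of_mem _ hj)

theorem wordProd_mem_standardParabolic {ω : List B} (hω : ∀ j ∈ ω, j ∈ J) :
    cs.wordProd ω ∈ standardParabolic cs J :=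
  Subgroup.list_prod_mem _ (List.forall_mem_map.2 fun j hj ↦
    simple_mem_standardParabolic (hω j hj))

theorem isReduced_cons_of_not_isLeftDescent {ω : List B} {i : B} (hω : cs.IsReduced ω)
    (h : ¬ cs.IsLeftDescent (cs.wordProd ω) i) : cs.IsReduced (i :: ω) := by
  rw [CoxeterSystem.IsReduced, cs.wordProd_cons, cs.not_isLeftDescent_iff.1 h, hω.eq,
    List.length_cons]

theorem exists_isReduced_simple_mul {ω : List B} {i : B} (hω : cs.IsReduced ω)
    (hωJ : ∀ j ∈ ω, j ∈ J) (hi : i ∈ J) :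
    ∃ ω' : List B, (∀ j ∈ ω', j ∈ J) ∧ cs.IsReduced ω' ∧
      cs.simple i * cs.wordProd ω = cs.wordProd ω' := by
  by_cases h : cs.IsLeftDescent (cs.wordProd ω) i
  · obtain ⟨ω₁, t, ω₂, rfl, hswap⟩ := exists_exchange h
    have hdel := simple_mul_wordProd_append_cons (ω₂ := ω₂) hswap
    have hsub : (ω₁ ++ ω₂).Sublist (ω₁ ++ t :: ω₂) :=
      (List.sublist_cons_self t ω₂).append_left ω₁
    refine ⟨ω₁ ++ ω₂, fun j hj ↦ hωJ j (hsub.subset hj), ?_, hdel⟩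
    have hlen := cs.isLeftDescent_iff.1 h
    rw [hdel, hω.eq] at hlen
    simp only [List.length_append, List.length_cons, CoxeterSystem.IsReduced] at hlen ⊢
    lia
  · exact ⟨i :: ω, by simpa [hi] using hωJ, isReduced_cons_of_not_isLeftDescent hω h,
      (cs.wordProd_cons i ω).symm⟩

theorem exists_isReduced_of_mem_standardParabolic {x : W} (hx : x ∈ standardParabolic cs J) :
    ∃ ω : List B, (∀ j ∈ ω, j ∈ J) ∧ cs.IsReduced ω ∧ x = cs.wordProd ω := by
  induction hx using Subgroup.closure_induction_left with
  | one => exact ⟨[], by simp, by simp [CoxeterSystem.IsReduced], by simp⟩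
  | mul_left s hs y _ ih =>
    obtain ⟨i, hi, rfl⟩ := hs
    obtain ⟨ω, hωJ, hω, rfl⟩ := ih
    exact exists_isReduced_simple_mul hω hωJ hi
  | inv_mul_cancel s hs y _ ih =>
    obtain ⟨i, hi, rfl⟩ := hs
    obtain ⟨ω, hωJ, hω, rfl⟩ := ih
    rw [cs.inv_simple]
    exact exists_isReduced_simple_mul hω hωJ hi

theorem exists_reduced_prefix_of_isLeftDescent {z : W} (hz : ∀ j ∈ J, cs.IsLeftDescent z j)
    {ω : List B} (hωJ : ∀ j ∈ ω, j ∈ J) (hω : cs.IsReduced ω) :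
    ∃ ω' : List B, z = cs.wordProd (ω ++ ω') ∧ (ω ++ ω').length = cs.length z := by
  induction ω with
  | nil =>
    obtain ⟨ω', hω', rfl⟩ := cs.exists_isReduced z
    exact ⟨ω', rfl, hω'.eq.symm⟩
  | cons i ω ih =>
    obtain ⟨ω', rfl, hlen⟩ := ih (fun j hj ↦ hωJ j (by simp [hj])) (hω.drop 1)
    obtain ⟨ω'', hlen', hexch⟩ := exists_exchange_append hω (hz i (hωJ i (by simp)))
    refine ⟨ω'', ?_, ?_⟩
    · rw [List.cons_append, cs.wordProd_cons, ← hexch, cs.simple_mul_simple_cancel_left]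
    · simp only [List.length_append, List.length_cons] at hlen ⊢
      lia

theorem finite_standardParabolic_of_isLeftDescent (hJ : J.Finite) {z : W}
    (hz : ∀ j ∈ J, cs.IsLeftDescent z j) : (standardParabolic cs J : Set W).Finite := by
  have : Finite J := hJ
  refine ((List.finite_length_le J (cs.length z)).image
    fun ω ↦ cs.wordProd (ω.map Subtype.val)).subset fun x hx ↦ ?_
  obtain ⟨ω, hωJ, hω, rfl⟩ := exists_isReduced_of_mem_standardParabolic hx
  obtain ⟨ω', -, hlen⟩ := exists_reduced_prefix_of_isLeftDescent hz hωJ hω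
  lift ω to List J using hωJ
  rw [List.length_append, List.length_map] at hlen
  exact ⟨ω, (Nat.le_add_right _ _).trans hlen.le, rfl⟩

theorem length_mul_of_forall_length_le {g : W}
    (hmin : ∀ y ∈ standardParabolic cs J, cs.length g ≤ cs.length (y * g)) {x : W}
    (hx : x ∈ standardParabolic cs J) : cs.length (x * g) = cs.length x + cs.length g := by
  obtain ⟨ω, hωJ, hω, rfl⟩ := exists_isReduced_of_mem_standardParabolic hx
  rw [hω.eq]
  clear hx
  induction ω with
  | nil => simp
  | cons i ω ih =>
    have hω'J : ∀ j ∈ ω, j ∈ J := fun j hj ↦ hωJ j (by simp [hj])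
    have ih := ih hω'J (hω.drop 1)
    by_cases h : cs.IsLeftDescent (cs.wordProd ω * g) i
    · obtain ⟨ω', hω', rfl⟩ := cs.exists_isReduced g
      rw [← cs.wordProd_append] at h
      obtain ⟨ω'', hlen, hexch⟩ := exists_exchange_append hω h
      have hmem : (cs.wordProd ω)⁻¹ * cs.simple i * cs.wordProd ω ∈ standardParabolic cs J :=
        mul_mem (mul_mem (inv_mem (wordProd_mem_standardParabolic hω'J))
          (simple_mem_standardParabolic (hωJ i (by simp)))) (wordProd_mem_standardParabolic hω'J)
      have hle := hmin _ hmem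
      rw [mul_assoc, mul_assoc, ← cs.wordProd_append, hexch, cs.wordProd_append,
        inv_mul_cancel_left, hω'.eq] at hle
      have := cs.length_wordProd_le ω''
      lia
    · rw [cs.wordProd_cons, mul_assoc, cs.not_isLeftDescent_iff.1 h, ih, List.length_cons]
      ring

theorem exists_mul_length_mul_eq_add (J : Set B) (g : W) :
    ∃ x ∈ standardParabolic cs J, ∀ y ∈ standardParabolic cs J,
      cs.length (y * (x * g)) = cs.length y + cs.length (x * g) := by
  obtain ⟨x, hx, hmin⟩ : ∃ x ∈ standardParabolic cs J, ∀ y ∈ standardParabolic cs J,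
      cs.length (x * g) ≤ cs.length (y * g) :=
    ⟨_, Function.argminOn_mem _ (standardParabolic cs J : Set W) ⟨1, one_mem _⟩,
      fun _ hy ↦ Function.argminOn_le (fun y ↦ cs.length (y * g)) _ hy⟩
  refine ⟨x, hx, fun y hy ↦ length_mul_of_forall_length_le (fun z hz ↦ ?_) hy⟩
  rw [← mul_assoc]
  exact hmin _ (mul_mem hz hx)

theorem exists_conj_simple_eq_simple {s t : B} {g x : W}
    (hts : cs.simple t * g = g * cs.simple s)
    (hadd : cs.length (x * cs.simple t * x⁻¹ * (x * g)) =
      cs.length (x * cs.simple t * x⁻¹) + cs.length (x * g)) :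
    ∃ j, x * cs.simple t * x⁻¹ = cs.simple j := by
  have hmove : x * cs.simple t * x⁻¹ * (x * g) = x * g * cs.simple s := by
    rw [mul_assoc x g, ← hts]
    group
  have hle := cs.length_mul_le (x * g) (cs.simple s)
  rw [← hmove, hadd, cs.length_simple] at hle
  have hne : cs.length (x * cs.simple t * x⁻¹) ≠ 0 := by
    rw [Ne, cs.length_eq_zero_iff, conj_eq_one_iff]
    exact fun h ↦ by simpa [h] using cs.length_simple t
  exact cs.length_eq_one_iff.1 (by lia)

/-- Both `t` and any left descent `t'` of `g` are left descents of `t * g`, so `⟨t, t'⟩` is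
finite; then `x` moves `g` to the shortest element of its coset `⟨t, t'⟩ g`. -/
theorem exists_finite_standardParabolic_length_mul_lt {s t : B} {g : W} (hg : g ≠ 1)
    (hts : cs.simple t * g = g * cs.simple s) (ht : ¬ cs.IsLeftDescent g t) :
    ∃ t', t ≠ t' ∧ (standardParabolic cs {t, t'} : Set W).Finite ∧
      ∃ x ∈ standardParabolic cs {t, t'}, cs.length (x * g) < cs.length g ∧
        ∃ j, x * cs.simple t * x⁻¹ = cs.simple j := by
  obtain ⟨t', ht'⟩ := cs.exists_leftDescent_of_ne_one hg
  have hlen_t := cs.not_isLeftDescent_iff.1 ht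
  have hlen_t' := cs.isLeftDescent_iff.1 ht'
  have hdesc : ∀ j ∈ ({t, t'} : Set B), cs.IsLeftDescent (cs.simple t * g) j := by
    rintro j (rfl | rfl)
    · rw [CoxeterSystem.IsLeftDescent, cs.simple_mul_simple_cancel_left]
      lia
    · have hle := cs.length_mul_le (cs.simple j * g) (cs.simple s)
      rw [mul_assoc, ← hts, cs.length_simple] at hle
      rw [CoxeterSystem.IsLeftDescent]
      lia
  have mem_t : cs.simple t ∈ standardParabolic cs {t, t'} :=
    simple_mem_standardParabolic (by simp)
  have mem_t' : cs.simple t' ∈ standardParabolic cs {t, t'} :=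
    simple_mem_standardParabolic (by simp)
  obtain ⟨x, hx, hadd⟩ := exists_mul_length_mul_eq_add (cs := cs) {t, t'} g
  refine ⟨t', fun h ↦ ht (h ▸ ht'), finite_standardParabolic_of_isLeftDescent (by simp) hdesc,
    x, hx, ?_, exists_conj_simple_eq_simple hts (hadd _ (mul_mem (mul_mem hx mem_t) (inv_mem hx)))⟩
  have hlen := hadd _ (mul_mem mem_t' (inv_mem hx))
  rw [mul_assoc, inv_mul_cancel_left] at hlen
  lia

end StandardParabolic

section WallChamber

/-- The chamber `u` has a panel on the wall of the reflection `r`: the reflected chamber `r * u`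
is adjacent to `u`. -/
def IsWallChamber (cs : CoxeterSystem M W) (r u : W) : Prop :=
  ∃ s, r * u = u * cs.simple s

variable {u : W}

/-- Only the reflection of `β` exchanges two adjacent chambers separated by `β`. -/
theorem IsHalfSpace.mul_mem_iff_of_isWallChamber (hβ : IsHalfSpace cs β rβ) (hne : r ≠ rβ)
    (hu : IsWallChamber cs r u) : r * u ∈ β ↔ u ∈ β := by
  obtain ⟨s, hs⟩ := hu
  have hsep : ¬ rβ * u = u * cs.simple s := fun h ↦ hne (mul_right_cancel (hs.trans h.symm))
  rw [hs]
  refine ⟨fun hus ↦ by_contra fun hu ↦ ?_, fun hu ↦ by_contra fun hus ↦ ?_⟩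
  · exact hsep (hβ.compl.mul_eq_mul_simple u s hu (not_not.2 hus))
  · exact hsep (hβ.mul_eq_mul_simple u s hu hus)

theorem IsHalfSpace.exists_isWallChamber (hα : IsHalfSpace cs α rα) (hβ : IsHalfSpace cs β rβ)
    (hβα : ¬ β ⊆ α) (hβα' : ¬ β ⊆ αᶜ) :
    ∃ u, IsWallChamber cs rα u ∧ u ∈ β ∧ rα * u ∈ β := by
  obtain ⟨d, hdβ, hdα⟩ := Set.not_subset.1 hβα
  obtain ⟨c, hcβ, hcα⟩ := Set.not_subset.1 hβα'
  rw [Set.notMem_compl_iff] at hcα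
  obtain ⟨ω, hω, hd⟩ := cs.exists_isReduced (c⁻¹ * d)
  rw [inv_mul_eq_iff_eq_mul] at hd
  subst hd
  obtain ⟨ω₁, t, ω₂, rfl, hcross⟩ := hα.exists_crossing hcα hdα
  refine ⟨c * cs.wordProd ω₁, ⟨t, hcross⟩, hβ.mul_wordProd_mem_of_isReduced hω hcβ hdβ, ?_⟩
  rw [List.append_cons] at hω hdβ
  have hmem := hβ.mul_wordProd_mem_of_isReduced hω hcβ hdβ
  rwa [cs.wordProd_append, cs.wordProd_singleton, ← mul_assoc, ← hcross] at hmem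

theorem IsHalfSpace.exists_isWallChamber_of_isOfFinOrder (hα : IsHalfSpace cs α rα)
    (hβ : IsHalfSpace cs β rβ) (hfin : IsOfFinOrder (rα * rβ)) (hne : α ≠ β) (hnopp : α ≠ βᶜ) :
    ∃ u, IsWallChamber cs rα u ∧ u ∈ β ∧ rα * u ∈ β := by
  refine hα.exists_isWallChamber hβ (fun h ↦ ?_) fun h ↦ ?_
  · exact hne (hα.eq_of_subset_of_isOfFinOrder hβ hfin h).symm
  · exact hnopp (compl_eq_comm.1 (hα.compl.eq_of_subset_of_isOfFinOrder hβ hfin h).symm).symm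

end WallChamber

section Residues

theorem image_mul_coset_eq {H : Subgroup W} {g c : W} (h : c⁻¹ * g * c ∈ H) :
    (g * ·) '' ((c * ·) '' (H : Set W)) = (c * ·) '' (H : Set W) := by
  ext x
  simp only [Set.image_mul_left, Set.mem_preimage, SetLike.mem_coe]
  rw [← H.mul_mem_cancel_left h]
  simp only [mul_assoc, mul_inv_cancel_left]

variable {R : Set W} {u v x y : W}

theorem mul_mem_of_mem_res2 (hR : R ∈ res2 cs r) (hx : x ∈ R) : r * x ∈ R :=
  hR.2 ▸ Set.mem_image_of_mem _ hx

theorem isOfFinOrder_of_mapsTo_mul_left {S : Set W} {g : W} (hS : S.Finite) (hne : S.Nonempty)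
    (hg : Set.MapsTo (g * ·) S S) : IsOfFinOrder g := by
  obtain ⟨c, hc⟩ := hne
  have hpow : ∀ n : ℕ, g ^ n * c ∈ S := fun n ↦ by
    induction n with
    | zero => simpa using hc
    | succ n ih =>
      rw [pow_succ', mul_assoc]
      exact hg ih
  by_contra hinf
  have hinj : Function.Injective fun n : ℕ ↦ g ^ n * c :=
    (mul_left_injective c).comp (injective_pow_iff_not_isOfFinOrder.2 hinf)
  exact Set.infinite_of_injective_forall_mem hinj hpow hS

theorem isOfFinOrder_mul_of_mem_res2 {r' : W} (hr : R ∈ res2 cs r) (hr' : R ∈ res2 cs r') :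
    IsOfFinOrder (r * r') := by
  obtain ⟨c, s, t, -, hfin, hR⟩ := hr.1
  refine isOfFinOrder_of_mapsTo_mul_left (S := R) (hR ▸ hfin.image _)
    (hR ▸ ⟨c, 1, one_mem _, mul_one c⟩) fun x hx ↦ ?_
  simp only [mul_assoc]
  exact mul_mem_of_mem_res2 hr (mul_mem_of_mem_res2 hr' hx)

theorem IsHalfSpace.mem_res2_of_separates (hβ : IsHalfSpace cs β rβ)
    (hR : IsSphRank2Residue cs R) (hxR : x ∈ R) (hyR : y ∈ R) (hxβ : x ∈ β) (hyβ : y ∉ β) :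
    R ∈ res2 cs rβ := by
  refine ⟨hR, ?_⟩
  obtain ⟨c, s, t, -, -, rfl⟩ := hR
  rw [← standardParabolic_pair] at hxR hyR ⊢
  rw [Set.image_mul_left, Set.mem_preimage, SetLike.mem_coe] at hxR hyR
  obtain ⟨ω, hω, -, hxy⟩ := exists_isReduced_of_mem_standardParabolic (mul_mem (inv_mem hxR) hyR)
  obtain rfl : y = x * cs.wordProd ω := by
    rw [← hxy]
    group
  obtain ⟨ω₁, i, ω₂, rfl, hcross⟩ := hβ.exists_crossing hxβ hyβ
  have hw : c⁻¹ * x * cs.wordProd ω₁ ∈ standardParabolic cs {s, t} :=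
    mul_mem hxR (wordProd_mem_standardParabolic fun j hj ↦ hω j (by simp [hj]))
  have hconj : c⁻¹ * rβ * c =
      c⁻¹ * x * cs.wordProd ω₁ * cs.simple i * (c⁻¹ * x * cs.wordProd ω₁)⁻¹ := by
    rw [eq_mul_inv_iff_mul_eq, mul_assoc c⁻¹ x, mul_assoc c⁻¹ _ (cs.simple i), ← hcross]
    group
  refine image_mul_coset_eq ?_
  rw [hconj]
  exact mul_mem (mul_mem hw (simple_mem_standardParabolic (hω i (by simp)))) (inv_mem hw)

theorem exists_res2_closer_of_not_isLeftDescent {t : B} (hu : IsWallChamber cs r u)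
    (hvt : r * v = v * cs.simple t) (hne : v ≠ u) (ht : ¬ cs.IsLeftDescent (v⁻¹ * u) t) :
    ∃ R ∈ res2 cs r, v ∈ R ∧ ∃ v' ∈ R, IsWallChamber cs r v' ∧
      cs.length (v'⁻¹ * u) < cs.length (v⁻¹ * u) := by
  obtain ⟨s, hs⟩ := hu
  have hconj : v⁻¹ * r * v = cs.simple t := by rw [mul_assoc, hvt, inv_mul_cancel_left]
  have hts : cs.simple t * (v⁻¹ * u) = v⁻¹ * u * cs.simple s := by
    rw [mul_assoc, ← hs, ← hconj]
    group
  obtain ⟨t', hne', hfin, x, hx, hlt, j, hj⟩ :=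
    exists_finite_standardParabolic_length_mul_lt (by rwa [Ne, inv_mul_eq_one]) hts ht
  refine ⟨(v * ·) '' (standardParabolic cs {t, t'} : Set W), ⟨?_, ?_⟩, ⟨1, one_mem _, mul_one v⟩,
    v * x⁻¹, ⟨x⁻¹, inv_mem hx, rfl⟩, ⟨j, ?_⟩, by rwa [mul_inv_rev, inv_inv, mul_assoc]⟩
  · rw [standardParabolic_pair] at hfin ⊢
    exact ⟨v, t, t', hne', hfin, rfl⟩
  · exact image_mul_coset_eq (hconj ▸ simple_mem_standardParabolic (by simp))
  · rw [← hj, ← mul_assoc, hvt]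
    group

theorem IsWallChamber.exists_res2_closer (hu : IsWallChamber cs r u) (hv : IsWallChamber cs r v)
    (hne : v ≠ u) (hne' : r * v ≠ u) :
    ∃ R ∈ res2 cs r, v ∈ R ∧ ∃ v' ∈ R, IsWallChamber cs r v' ∧
      cs.length (v'⁻¹ * u) < cs.length (v⁻¹ * u) := by
  obtain ⟨t, hvt⟩ := hv
  by_cases ht : cs.IsLeftDescent (v⁻¹ * u) t
  · have hmove : (r * v)⁻¹ * u = cs.simple t * (v⁻¹ * u) := by
      rw [hvt, mul_inv_rev, cs.inv_simple, mul_assoc]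
    have hback : r * (r * v) = v := by
      rw [hvt, ← mul_assoc, hvt, cs.simple_mul_simple_cancel_right]
    obtain ⟨R, hR, hrv, v', hv', hwall, hlt⟩ :=
      exists_res2_closer_of_not_isLeftDescent (v := r * v) (t := t) hu (by rw [mul_assoc, ← hvt])
        hne' (by
          rw [hmove, CoxeterSystem.IsLeftDescent, cs.simple_mul_simple_cancel_left]
          exact ht.not_gt)
    refine ⟨R, hR, hback ▸ mul_mem_of_mem_res2 hR hrv, v', hv', hwall, hlt.trans ?_⟩
    rw [hmove]
    exact ht
  · exact exists_res2_closer_of_not_isLeftDescent hu hvt hne ht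

/-- Walking along the wall of `r` from `v` to `u` by residues in `∂²`, one of them has to be
cut by `β`. -/
theorem IsHalfSpace.exists_res2_separated (hβ : IsHalfSpace cs β rβ) (hne : r ≠ rβ)
    (hu : IsWallChamber cs r u) (huβ : u ∈ β) (hv : IsWallChamber cs r v) (hvβ : v ∉ β) :
    ∃ R ∈ res2 cs r, (∃ x ∈ R, IsWallChamber cs r x ∧ x ∈ β) ∧
      ∃ y ∈ R, IsWallChamber cs r y ∧ y ∉ β := by
  induction hn : cs.length (v⁻¹ * u) using Nat.strong_induction_on generalizing v with
  | _ n ih =>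
    have hrv : r * v ∉ β := mt (hβ.mul_mem_iff_of_isWallChamber hne hv).1 hvβ
    obtain ⟨R, hR, hvR, v', hv'R, hv', hlt⟩ := hu.exists_res2_closer hv
      (ne_of_mem_of_not_mem huβ hvβ).symm (ne_of_mem_of_not_mem huβ hrv).symm
    by_cases hv'β : v' ∈ β
    · exact ⟨R, hR, ⟨v', hv'R, hv', hv'β⟩, v, hvR, hv, hvβ⟩
    · exact ih _ (hn ▸ hlt) hv' hv'β rfl

theorem IsHalfSpace.exists_mem_inter_of_isWallChamber (hα : IsHalfSpace cs α rα)
    (hβ : IsHalfSpace cs β rβ) (hne : rα ≠ rβ) (hR : R ∈ res2 cs rα) (hxR : x ∈ R)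
    (hx : IsWallChamber cs rα x) (hxβ : x ∈ β) : ∃ p ∈ R, p ∈ α ∩ β := by
  by_cases hxα : x ∈ α
  · exact ⟨x, hxR, hxα, hxβ⟩
  · exact ⟨rα * x, mul_mem_of_mem_res2 hR hxR, (hα.mul_mem_iff x).2 hxα,
      (hβ.mul_mem_iff_of_isWallChamber hne hx).2 hxβ⟩

theorem IsHalfSpace.exists_res2_inter_nonempty (hα : IsHalfSpace cs α rα)
    (hβ : IsHalfSpace cs β rβ) (hfin : IsOfFinOrder (rα * rβ)) (hne : α ≠ β) (hnopp : α ≠ βᶜ) :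
    ∃ R ∈ res2 cs rα, (∃ p ∈ R, p ∈ α ∩ β) ∧ ∃ q ∈ R, q ∈ αᶜ ∩ βᶜ := by
  obtain ⟨u, hu, huβ, hruβ⟩ := hα.exists_isWallChamber_of_isOfFinOrder hβ hfin hne hnopp
  obtain ⟨v, hv, hvβ, -⟩ :=
    hα.exists_isWallChamber_of_isOfFinOrder hβ.compl hfin hnopp (by rwa [compl_compl])
  have hr : rα ≠ rβ := by
    rintro rfl
    exact (hβ.mul_mem_iff u).1 hruβ huβ
  obtain ⟨R, hR, ⟨x, hxR, hx, hxβ⟩, y, hyR, hy, hyβ⟩ :=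
    hβ.exists_res2_separated hr hu huβ hv hvβ
  exact ⟨R, hR, hα.exists_mem_inter_of_isWallChamber hβ hr hR hxR hx hxβ,
    hα.compl.exists_mem_inter_of_isWallChamber hβ.compl hr hR hyR hy hyβ⟩

end Residues

end HalfSpaces

theorem stmt7_general (cs : CoxeterSystem M W) (α β γ : Set W) (rα rβ rγ : W)
    (hα : IsRootPair cs α rα) (hβ : IsRootPair cs β rβ) (hγ : IsRootPair cs γ rγ)
    (hne : α ≠ β) (hnopp : α ≠ βᶜ) (hfin : IsOfFinOrder (rα * rβ))
    (hαβγ : α ∩ β ⊆ γ) (hαβγ' : αᶜ ∩ βᶜ ⊆ γᶜ) :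
    (∃ R : Set W, R ∈ res2 cs rα ∧ R ∈ res2 cs rβ ∧ R ∈ res2 cs rγ) ∧
      IsOfFinOrder (rα * rγ) ∧ IsOfFinOrder (rβ * rγ) := by
  obtain ⟨R, hRα, ⟨p, hpR, hp⟩, q, hqR, hq⟩ :=
    hα.isHalfSpace.exists_res2_inter_nonempty hβ.isHalfSpace hfin hne hnopp
  have hRβ : R ∈ res2 cs rβ := hβ.isHalfSpace.mem_res2_of_separates hRα.1 hpR hqR hp.2 hq.2
  have hRγ : R ∈ res2 cs rγ :=
    hγ.isHalfSpace.mem_res2_of_separates hRα.1 hpR hqR (hαβγ hp) (hαβγ' hq)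
  exact ⟨⟨R, hRα, hRβ, hRγ⟩, isOfFinOrder_mul_of_mem_res2 hRα hRγ,
    isOfFinOrder_mul_of_mem_res2 hRβ hRγ⟩

/-- If `α ≠ ±β` are roots with `o(r_α r_β) < ∞` and `γ ∈ (α, β)`, then
`∂²α ∩ ∂²β ∩ ∂²γ ≠ ∅` and `o(r_α r_γ), o(r_β r_γ) < ∞`. -/
theorem stmt7 (cs : CoxeterSystem M W)
    (hM : ∀ s t : B, s ≠ t → M.M s t ∈ ({0, 2, 3, 4, 6, 8} : Set ℕ))
    (α β γ : Set W) (rα rβ rγ : W)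
    (hα : IsRootPair cs α rα) (hβ : IsRootPair cs β rβ) (hγ : IsRootPair cs γ rγ)
    (hne : α ≠ β) (hnopp : α ≠ βᶜ)
    (hfin : IsOfFinOrder (rα * rβ))
    -- `γ ∈ (α, β)`:
    (h1 : α ∩ β ⊆ γ) (h2 : αᶜ ∩ βᶜ ⊆ γᶜ) (h3 : γ ≠ α) (h4 : γ ≠ β) :
    (∃ R : Set W, R ∈ res2 cs rα ∧ R ∈ res2 cs rβ ∧ R ∈ res2 cs rγ) ∧
      IsOfFinOrder (rα * rγ) ∧ IsOfFinOrder (rβ * rγ) :=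
  stmt7_general cs α β γ rα rβ rγ hα hβ hγ hne hnopp hfin h1 h2
end

section
/- Let (W,S) be a 2-spherical Coxeter system whose Coxeter diagram is the complete graph (m_{st} ≥ 3 for all s ≠ t), and suppose also m_{pq} ≠ 3 for all p,q. Let w ∈ W and s ≠ t ∈ S with ℓ(ws) = ℓ(w)+1 = ℓ(wt), and let w' ∈ ⟨s,t⟩ with ℓ(w') ≥ 2. Then for each r ∈ S \ {s,t} and f ∈ S \ {r}, ℓ(ww'rf) = ℓ(w) + ℓ(w') + 2. -/
/-!
In the geometric representation, `i` is a right descent of `w` exactly when `w αᵢ` is a nonpositive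
combination of simple roots. Hence two descents `a ≠ b` of `z` also produce descents further down
the coset `z⟨a, b⟩`: `b` is a descent of `za`, `a` is one of `zab` when `m_{ab} ≥ 3`, and `b` is one
of `zaba` when `m_{ab} ≥ 4`.

Consequently, if no two generators commute and `a`, `b`, `c` are distinct, then no `z` has descents
`a`, `b` while `c` is a descent of `za`: such a configuration `(a, b, c; z)` would reproduce itself
as `(b, c, a; za)`, with an element of smaller length. Lengths are additive on `w W_J` when `w` has
no descent in `J`, and if `ww'r` or `ww'rf` failed to be longer than its predecessor, then such a
configuration would exist.
-/

namespace CoxeterGeometry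

open Module Real Polynomial.Chebyshev
open CoxeterSystem (alternatingWord alternatingWord_succ alternatingWord_succ'
  length_alternatingWord)

section Chebyshev

lemma sin_two_pi_div_ne_zero {m : ℕ} (hm : 2 < m) : sin (2 * (π / m)) ≠ 0 := by
  have hm' : (2 : ℝ) < m := mod_cast hm
  refine (sin_pos_of_pos_of_lt_pi (by positivity) ?_).ne'
  calc 2 * (π / m) = π * (2 / m) := by ring
    _ < π * 1 := by gcongr; exact (div_lt_one (by positivity)).2 hm'
    _ = π := mul_one π

lemma eval_S_two_mul_cos_of_even {k : ℕ} (hk : 2 < 2 * k) :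
    (S ℝ (k - 1)).eval (2 * cos (2 * (π / (2 * k : ℕ)))) = 0 := by
  refine (mul_eq_zero_iff_right (sin_two_pi_div_ne_zero hk)).1 ?_
  have hk' : (k : ℝ) ≠ 0 := by norm_cast; lia
  have hangle : ((k - 1 : ℤ) + 1 : ℝ) * (2 * (π / (2 * k : ℕ))) = π := by
    push_cast; field_simp; ring
  rw [S_two_mul_real_cos, hangle, sin_pi]

lemma eval_S_add_eval_S_two_mul_cos_of_odd {k : ℕ} (hk : 2 < 2 * k + 1) :
    (S ℝ k).eval (2 * cos (2 * (π / (2 * k + 1 : ℕ)))) +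
      (S ℝ (k - 1)).eval (2 * cos (2 * (π / (2 * k + 1 : ℕ)))) = 0 := by
  refine (mul_eq_zero_iff_right (sin_two_pi_div_ne_zero hk)).1 ?_
  have hangle : ((k - 1 : ℤ) + 1 : ℝ) * (2 * (π / (2 * k + 1 : ℕ))) =
      2 * π - ((k : ℤ) + 1) * (2 * (π / (2 * k + 1 : ℕ))) := by
    push_cast; field_simp; ring
  rw [add_mul, S_two_mul_real_cos, S_two_mul_real_cos, hangle, sin_two_pi_sub, add_neg_cancel]

lemma eval_S_two_mul_cos_pi_div_nonneg {m : ℕ} {k : ℤ} (hk : -1 ≤ k) (hkm : m = 0 ∨ k < m) :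
    0 ≤ (S ℝ k).eval (2 * cos (π / m)) := by
  obtain rfl | rfl | hm : m = 0 ∨ m = 1 ∨ 1 < m := by lia
  · have : (-1 : ℝ) ≤ k := mod_cast hk
    simp only [CharP.cast_eq_zero, div_zero, cos_zero, mul_one, S_eval_two]
    linarith
  · obtain rfl | rfl : k = -1 ∨ k = 0 := by lia
    all_goals simp
  · have hm' : (1 : ℝ) < m := mod_cast hm
    have hk0 : (0 : ℝ) ≤ k + 1 := by exact_mod_cast (by lia : (0 : ℤ) ≤ k + 1)
    have hkm' : (k + 1 : ℝ) ≤ m := by exact_mod_cast (by lia : k + 1 ≤ (m : ℤ))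
    have hsin : 0 < sin (π / m) :=
      sin_pos_of_pos_of_lt_pi (by positivity) (div_lt_self pi_pos hm')
    refine nonneg_of_mul_nonneg_left ?_ hsin
    rw [S_two_mul_real_cos]
    refine sin_nonneg_of_nonneg_of_le_pi (by positivity) ?_
    calc (k + 1) * (π / m) ≤ m * (π / m) := by gcongr
      _ = π := mul_div_cancel₀ π (by positivity)

end Chebyshev

variable {B : Type*}

/-- The simple root `αᵢ`: the geometric representation acts on the real vector space with basis the
simple roots, modelled as `B →₀ ℝ`. -/
noncomputable def simpleRoot (i : B) : B →₀ ℝ := Finsupp.single i 1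

/-- The simple coroot `αᵢ^∨ = 2 (αᵢ, ·)` of the standard bilinear form. An entry `M i j = 0` encodes
`m_{ij} = ∞`, and then `π / 0 = 0` gives the coefficient `-2` of the usual convention. -/
noncomputable def simpleCoroot (M : CoxeterMatrix B) (i : B) : Dual ℝ (B →₀ ℝ) :=
  Finsupp.linearCombination ℝ fun j ↦ -(2 * cos (π / M i j))

variable (M : CoxeterMatrix B)

lemma simpleCoroot_simpleRoot (i j : B) :
    simpleCoroot M i (simpleRoot j) = -(2 * cos (π / M i j)) := by
  simp [simpleCoroot, simpleRoot]

lemma simpleCoroot_simpleRoot_self (i : B) : simpleCoroot M i (simpleRoot i) = 2 := by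
  simp [simpleCoroot_simpleRoot]

/-- The reflection in the simple root `αᵢ`, by which the `i`-th generator acts in the geometric
representation. -/
noncomputable def simpleReflection (i : B) : (B →₀ ℝ) ≃ₗ[ℝ] (B →₀ ℝ) :=
  reflection (simpleCoroot_simpleRoot_self M i)

lemma simpleReflection_apply (i : B) (v : B →₀ ℝ) :
    simpleReflection M i v = v - simpleCoroot M i v • simpleRoot i :=
  reflection_apply v (simpleCoroot_simpleRoot_self M i)

lemma simpleReflection_simpleRoot_self (i : B) :
    simpleReflection M i (simpleRoot i) = -simpleRoot i :=
  reflection_apply_self (simpleCoroot_simpleRoot_self M i)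

lemma simpleReflection_simpleRoot (i j : B) :
    simpleReflection M i (simpleRoot j) =
      simpleRoot j + (2 * cos (π / M i j)) • simpleRoot i := by
  rw [simpleReflection_apply, simpleCoroot_simpleRoot, neg_smul, sub_neg_eq_add]

lemma simpleReflection_mul_self (i : B) : simpleReflection M i * simpleReflection M i = 1 :=
  LinearEquiv.ext (involutive_reflection (simpleCoroot_simpleRoot_self M i))

lemma two_mul_cos_two_mul_pi_div (i j : B) :
    2 * cos (2 * (π / M i j)) =
      simpleCoroot M i (simpleRoot j) * simpleCoroot M j (simpleRoot i) - 2 := by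
  rw [simpleCoroot_simpleRoot, simpleCoroot_simpleRoot, M.symmetric j i, cos_two_mul]
  ring

lemma simpleReflection_mul_sq {i j : B} (hij : M i j = 2) :
    (simpleReflection M i * simpleReflection M j) ^ 2 = 1 := by
  have hcomm : Commute (simpleReflection M i) (simpleReflection M j) := by
    refine LinearEquiv.ext fun v ↦ ?_
    have hij0 : cos (π / M i j) = 0 := by simp [hij]
    have hji0 : cos (π / M j i) = 0 := by simp [M.symmetric j i, hij]
    simp only [LinearEquiv.mul_apply, simpleReflection_apply, map_sub, map_smul,
      simpleCoroot_simpleRoot, hij0, hji0, mul_zero, neg_zero]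
    module
  rw [hcomm.mul_pow, pow_two, pow_two, simpleReflection_mul_self, simpleReflection_mul_self,
    mul_one]

lemma simpleReflection_mul_pow_of_two_lt {i j : B} (hij : 2 < M i j) :
    (simpleReflection M i * simpleReflection M j) ^ M i j = 1 := by
  refine LinearEquiv.ext fun v ↦ ?_
  have hpow := reflection_mul_reflection_pow_apply (simpleCoroot_simpleRoot_self M i)
    (simpleCoroot_simpleRoot_self M j) (M i j) v _ (two_mul_cos_two_mul_pi_div M i j)
  refine hpow.trans ?_
  obtain ⟨k, hk | hk⟩ := (M i j).even_or_odd' <;> rw [hk] at hij ⊢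
  · have hvanish := eval_S_two_mul_cos_of_even hij
    rw [show (((2 * k : ℕ) : ℤ) - 2) / 2 = k - 1 by lia,
      show (((2 * k : ℕ) : ℤ) - 1) / 2 = k - 1 by lia, hvanish]
    simp
  · have hvanish := eval_S_add_eval_S_two_mul_cos_of_odd hij
    rw [show (((2 * k + 1 : ℕ) : ℤ) - 2) / 2 = k - 1 by lia,
      show (((2 * k + 1 : ℕ) : ℤ) - 1) / 2 = k by lia,
      show (((2 * k + 1 : ℕ) : ℤ) - 3) / 2 = k - 1 by lia,
      show ((2 * k + 1 : ℕ) : ℤ) / 2 = k by lia, hvanish]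
    simp

lemma isLiftable_simpleReflection : M.IsLiftable (simpleReflection M) := by
  intro i j
  obtain hij | hij | hij | hij : M i j = 0 ∨ M i j = 1 ∨ M i j = 2 ∨ 2 < M i j := by lia
  · rw [hij, pow_zero]
  · obtain rfl : i = j := not_ne_iff.1 fun hne ↦ M.off_diagonal i j hne hij
    rw [hij, pow_one, simpleReflection_mul_self]
  · rw [hij, simpleReflection_mul_sq M hij]
  · exact simpleReflection_mul_pow_of_two_lt M hij

variable {M} {W : Type*} [Group W] (cs : CoxeterSystem M W)

/-- The geometric (Tits) representation, which detects descents by the signs of the images of simple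
roots. -/
noncomputable def geometricRep : W →* ((B →₀ ℝ) ≃ₗ[ℝ] (B →₀ ℝ)) :=
  cs.lift ⟨simpleReflection M, isLiftable_simpleReflection M⟩

lemma geometricRep_simple (i : B) : geometricRep cs (cs.simple i) = simpleReflection M i :=
  cs.lift_apply_simple (isLiftable_simpleReflection M) i

lemma geometricRep_mul_apply (w w' : W) (v : B →₀ ℝ) :
    geometricRep cs (w * w') v = geometricRep cs w (geometricRep cs w' v) := by
  rw [map_mul, LinearEquiv.mul_apply]

lemma geometricRep_mul_simple_simpleRoot (w : W) (i : B) :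
    geometricRep cs (w * cs.simple i) (simpleRoot i) = -geometricRep cs w (simpleRoot i) := by
  rw [geometricRep_mul_apply, geometricRep_simple, simpleReflection_simpleRoot_self, map_neg]

lemma geometricRep_alternatingWord (i j : B) (k : ℕ) :
    geometricRep cs (cs.wordProd (alternatingWord i j k)) (simpleRoot i) =
      (S ℝ k).eval (2 * cos (π / M i j)) • simpleRoot (if Even k then i else j) +
      (S ℝ (k - 1)).eval (2 * cos (π / M i j)) • simpleRoot (if Even k then j else i) := by
  induction k with
  | zero => simp [alternatingWord]
  | succ k ih =>
    have hrec : (S ℝ (k + 1)).eval (2 * cos (π / M i j)) =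
        2 * cos (π / M i j) * (S ℝ k).eval (2 * cos (π / M i j)) -
          (S ℝ (k - 1)).eval (2 * cos (π / M i j)) := by
      simp [S_add_one]
    rw [alternatingWord_succ', cs.wordProd_cons, geometricRep_mul_apply, ih, geometricRep_simple]
    push_cast
    rw [add_sub_cancel_right, hrec]
    by_cases hk : Even k <;>
    · simp only [hk, Nat.even_add_one, not_true_eq_false, not_false_eq_true, if_true, if_false,
        map_add, map_smul, simpleReflection_simpleRoot_self, simpleReflection_simpleRoot,
        M.symmetric j i]
      module

lemma exists_nonneg_geometricRep_alternatingWord {i j : B} {k : ℕ}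
    (hk : M i j = 0 ∨ k < M i j) :
    ∃ x y : ℝ, 0 ≤ x ∧ 0 ≤ y ∧
      geometricRep cs (cs.wordProd (alternatingWord i j k)) (simpleRoot i) =
        x • simpleRoot i + y • simpleRoot j := by
  have hx := eval_S_two_mul_cos_pi_div_nonneg (m := M i j) (k := k) (by lia) (by lia)
  have hy := eval_S_two_mul_cos_pi_div_nonneg (m := M i j) (k := k - 1) (by lia) (by lia)
  rw [geometricRep_alternatingWord]
  split_ifs
  · exact ⟨_, _, hx, hy, rfl⟩
  · exact ⟨_, _, hy, hx, add_comm ..⟩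

lemma exists_eq_mul_alternatingWord {w : W} {i : B} (hi : ¬cs.IsRightDescent w i) (j : B) :
    ∃ (v : W) (k : ℕ), w = v * cs.wordProd (alternatingWord i j k) ∧
      cs.length w = cs.length v + k ∧ ¬cs.IsRightDescent v i ∧ ¬cs.IsRightDescent v j := by
  by_cases hj : cs.IsRightDescent w j
  · obtain ⟨v, k, hw, hlen, hvj, hvi⟩ := exists_eq_mul_alternatingWord
      (cs.isRightDescent_iff_not_isRightDescent_mul.1 hj) i
    refine ⟨v, k + 1, ?_, ?_, hvi, hvj⟩
    · rw [alternatingWord_succ, cs.wordProd_concat, ← mul_assoc, ← hw,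
        cs.simple_mul_simple_cancel_right]
    · rw [← cs.isRightDescent_iff.1 hj, hlen, add_assoc]
  · exact ⟨w, 0, by simp [alternatingWord], rfl, hi, hj⟩
termination_by cs.length w
decreasing_by exact hj

lemma lt_of_not_isRightDescent_mul_alternatingWord {v : W} {i j : B} {k : ℕ}
    (hi : ¬cs.IsRightDescent (v * cs.wordProd (alternatingWord i j k)) i)
    (hlen : cs.length (v * cs.wordProd (alternatingWord i j k)) = cs.length v + k) :
    M i j = 0 ∨ k < M i j := by
  rw [cs.not_isRightDescent_iff, hlen, mul_assoc, ← cs.wordProd_concat,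
    ← alternatingWord_succ] at hi
  have hle := cs.length_mul_le v (cs.wordProd (alternatingWord j i (k + 1)))
  have hword := cs.length_wordProd_le (alternatingWord j i (k + 1))
  have hred : cs.IsReduced (alternatingWord j i (k + 1)) := by
    rw [length_alternatingWord] at hword
    rw [CoxeterSystem.IsReduced, length_alternatingWord]
    lia
  by_contra! hM
  rw [M.symmetric i j] at hM
  exact cs.not_isReduced_alternatingWord j i hM.1 (Nat.lt_succ_of_le hM.2) hred

theorem geometricRep_simpleRoot_nonneg {w : W} {i : B} (hi : ¬cs.IsRightDescent w i) :
    0 ≤ geometricRep cs w (simpleRoot i) := by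
  obtain rfl | hw := eq_or_ne w 1
  · simp [simpleRoot]
  obtain ⟨j, hj⟩ := cs.exists_rightDescent_of_ne_one hw
  obtain ⟨v, k, rfl, hlen, hvi, hvj⟩ := exists_eq_mul_alternatingWord cs hi j
  have hk0 : k ≠ 0 := by
    rintro rfl
    exact hvj (by simpa [alternatingWord] using hj)
  obtain ⟨x, y, hx, hy, hxy⟩ := exists_nonneg_geometricRep_alternatingWord cs
    (lt_of_not_isRightDescent_mul_alternatingWord cs hi hlen)
  rw [geometricRep_mul_apply, hxy, map_add, map_smul, map_smul]
  exact add_nonneg (smul_nonneg hx (geometricRep_simpleRoot_nonneg hvi))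
    (smul_nonneg hy (geometricRep_simpleRoot_nonneg hvj))
termination_by cs.length w
decreasing_by all_goals lia

lemma geometricRep_simpleRoot_ne_zero (w : W) (i : B) :
    geometricRep cs w (simpleRoot i) ≠ 0 := by
  simp [simpleRoot]

theorem isRightDescent_iff_geometricRep_nonpos {w : W} {i : B} :
    cs.IsRightDescent w i ↔ geometricRep cs w (simpleRoot i) ≤ 0 := by
  refine ⟨fun hi ↦ ?_, fun hneg ↦ ?_⟩
  · rw [cs.isRightDescent_iff_not_isRightDescent_mul] at hi
    have hpos := geometricRep_simpleRoot_nonneg cs hi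
    rwa [geometricRep_mul_simple_simpleRoot, neg_nonneg] at hpos
  · by_contra hi
    exact geometricRep_simpleRoot_ne_zero cs w i
      (le_antisymm hneg (geometricRep_simpleRoot_nonneg cs hi))

theorem not_isRightDescent_iff_geometricRep_nonneg {w : W} {i : B} :
    ¬cs.IsRightDescent w i ↔ 0 ≤ geometricRep cs w (simpleRoot i) :=
  ⟨geometricRep_simpleRoot_nonneg cs, fun hpos hi ↦ geometricRep_simpleRoot_ne_zero cs w i
    (le_antisymm ((isRightDescent_iff_geometricRep_nonpos cs).1 hi) hpos)⟩

theorem isRightDescent_mul_alternatingWord {z : W} {i j : B} {k : ℕ}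
    (hi : cs.IsRightDescent z i) (hj : cs.IsRightDescent z j) (hk : M i j = 0 ∨ k < M i j) :
    cs.IsRightDescent (z * cs.wordProd (alternatingWord i j k)) i := by
  rw [isRightDescent_iff_geometricRep_nonpos] at hi hj ⊢
  obtain ⟨x, y, hx, hy, hxy⟩ := exists_nonneg_geometricRep_alternatingWord cs hk
  rw [geometricRep_mul_apply, hxy, map_add, map_smul, map_smul]
  exact add_nonpos (smul_nonpos_of_nonneg_of_nonpos hx hi) (smul_nonpos_of_nonneg_of_nonpos hy hj)

section Parabolic

/-- The standard parabolic subgroup `W_J` generated by the simple reflections indexed by `J`. -/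
def parabolicSubgroup (J : Set B) : Subgroup W := Subgroup.closure (cs.simple '' J)

variable {cs} {J : Set B} {w w' : W} {i j : B}

lemma simple_mem_parabolicSubgroup (hj : j ∈ J) : cs.simple j ∈ parabolicSubgroup cs J :=
  Subgroup.subset_closure (Set.mem_image_of_mem cs.simple hj)

lemma geometricRep_sub_mem_supported (hw : w ∈ parabolicSubgroup cs J) (v : B →₀ ℝ) :
    geometricRep cs w v - v ∈ Finsupp.supported ℝ ℝ J := by
  induction hw using Subgroup.closure_induction generalizing v with
  | mem g hg =>
    obtain ⟨j, hj, rfl⟩ := hg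
    rw [geometricRep_simple, simpleReflection_apply, sub_sub_cancel_left]
    exact neg_mem (Submodule.smul_mem _ _ (Finsupp.single_mem_supported ℝ 1 hj))
  | one => simp
  | mul g h _ _ ihg ihh =>
    rw [geometricRep_mul_apply, ← sub_add_sub_cancel _ (geometricRep cs h v) v]
    exact add_mem (ihg _) (ihh v)
  | inv g _ ih =>
    have hinv := neg_mem (ih (geometricRep cs g⁻¹ v))
    rwa [← geometricRep_mul_apply, mul_inv_cancel, map_one, LinearEquiv.coe_one, id_eq,
      neg_sub] at hinv

lemma geometricRep_simpleRoot_mem_supported (hw : w ∈ parabolicSubgroup cs J) (hj : j ∈ J) :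
    geometricRep cs w (simpleRoot j) ∈ Finsupp.supported ℝ ℝ J :=
  ((Finsupp.supported ℝ ℝ J).sub_mem_iff_left (Finsupp.single_mem_supported ℝ 1 hj)).1
    (geometricRep_sub_mem_supported hw (simpleRoot j))

lemma mem_of_isRightDescent_of_mem_parabolicSubgroup (hw : w ∈ parabolicSubgroup cs J)
    (hi : cs.IsRightDescent w i) : i ∈ J := by
  by_contra hiJ
  have hcoeff : (geometricRep cs w (simpleRoot i) - simpleRoot i) i = 0 :=
    (Finsupp.mem_supported' ℝ _).1 (geometricRep_sub_mem_supported hw _) i hiJ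
  have hneg : geometricRep cs w (simpleRoot i) i ≤ 0 :=
    (isRightDescent_iff_geometricRep_nonpos cs).1 hi i
  rw [Finsupp.sub_apply, simpleRoot, Finsupp.single_eq_same, sub_eq_zero] at hcoeff
  exact absurd hneg (by simp [simpleRoot, hcoeff])

lemma geometricRep_nonneg_of_mem_supported (hw : ∀ j ∈ J, ¬cs.IsRightDescent w j) {v : B →₀ ℝ}
    (hvJ : v ∈ Finsupp.supported ℝ ℝ J) (hv : 0 ≤ v) : 0 ≤ geometricRep cs w v := by
  have hsum : v = ∑ j ∈ v.support, v j • simpleRoot j := by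
    simpa [simpleRoot, Finsupp.sum] using v.sum_single.symm
  rw [hsum, map_sum]
  refine Finset.sum_nonneg fun j hj ↦ ?_
  rw [map_smul]
  exact smul_nonneg (hv j) (geometricRep_simpleRoot_nonneg cs (hw j (hvJ hj)))

theorem isRightDescent_mul_iff_of_mem_parabolicSubgroup (hw : ∀ j ∈ J, ¬cs.IsRightDescent w j)
    (hw' : w' ∈ parabolicSubgroup cs J) (hj : j ∈ J) :
    cs.IsRightDescent (w * w') j ↔ cs.IsRightDescent w' j := by
  have hmem := geometricRep_simpleRoot_mem_supported hw' hj
  refine ⟨fun hdesc ↦ ?_, fun hdesc ↦ ?_⟩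
  · contrapose! hdesc
    rw [not_isRightDescent_iff_geometricRep_nonneg] at hdesc ⊢
    rw [geometricRep_mul_apply]
    exact geometricRep_nonneg_of_mem_supported hw hmem hdesc
  · rw [isRightDescent_iff_geometricRep_nonpos] at hdesc ⊢
    rw [geometricRep_mul_apply, ← neg_nonneg, ← map_neg]
    exact geometricRep_nonneg_of_mem_supported hw (neg_mem hmem) (neg_nonneg.2 hdesc)

theorem length_mul_of_mem_parabolicSubgroup {w' : W}
    (hw : ∀ j ∈ J, ¬cs.IsRightDescent w j) (hw' : w' ∈ parabolicSubgroup cs J) :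
    cs.length (w * w') = cs.length w + cs.length w' := by
  obtain rfl | hne := eq_or_ne w' 1
  · simp
  obtain ⟨j, hj⟩ := cs.exists_rightDescent_of_ne_one hne
  have hjJ := mem_of_isRightDescent_of_mem_parabolicSubgroup hw' hj
  have hwj := (isRightDescent_mul_iff_of_mem_parabolicSubgroup hw hw' hjJ).2 hj
  have ih := length_mul_of_mem_parabolicSubgroup hw
    (mul_mem hw' (simple_mem_parabolicSubgroup hjJ))
  rw [← cs.isRightDescent_iff.1 hwj, ← cs.isRightDescent_iff.1 hj, mul_assoc, ih, add_assoc]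
termination_by cs.length w'
decreasing_by exact hj

lemma exists_isRightDescent_mul_mul_simple (hw : ∀ j ∈ J, ¬cs.IsRightDescent w j)
    (hw' : w' ∈ parabolicSubgroup cs J) (hlen : 2 ≤ cs.length w') (hi : cs.IsRightDescent w' i) :
    ∃ j ∈ J, j ≠ i ∧ cs.IsRightDescent (w * w' * cs.simple i) j := by
  have hlen_mul := cs.isRightDescent_iff.1 hi
  have hne : w' * cs.simple i ≠ 1 := by
    rw [ne_eq, ← cs.length_eq_zero_iff]
    lia
  obtain ⟨j, hj⟩ := cs.exists_rightDescent_of_ne_one hne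
  have hmem : w' * cs.simple i ∈ parabolicSubgroup cs J := mul_mem hw'
    (simple_mem_parabolicSubgroup (mem_of_isRightDescent_of_mem_parabolicSubgroup hw' hi))
  have hjJ := mem_of_isRightDescent_of_mem_parabolicSubgroup hmem hj
  refine ⟨j, hjJ, ?_, ?_⟩
  · rintro rfl
    exact cs.isRightDescent_iff_not_isRightDescent_mul.1 hi hj
  · rw [mul_assoc]
    exact (isRightDescent_mul_iff_of_mem_parabolicSubgroup hw hmem hjJ).2 hj

end Parabolic

section CompleteDiagram

variable {cs} {a b f r : B} {w w' z : W} {J : Set B}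

lemma isRightDescent_mul_simple (hab : a ≠ b) (ha : cs.IsRightDescent z a)
    (hb : cs.IsRightDescent z b) : cs.IsRightDescent (z * cs.simple a) b := by
  have hMba : M b a ≠ 1 := M.off_diagonal b a hab.symm
  simpa [alternatingWord] using
    isRightDescent_mul_alternatingWord cs (k := 1) hb ha (by lia)

lemma isRightDescent_mul_simple_mul_simple (hab : a ≠ b) (hM : M a b ≠ 2)
    (ha : cs.IsRightDescent z a) (hb : cs.IsRightDescent z b) :
    cs.IsRightDescent (z * cs.simple a * cs.simple b) a := by
  have hMab : M a b ≠ 1 := M.off_diagonal a b hab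
  simpa [alternatingWord, CoxeterSystem.wordProd_cons, mul_assoc] using
    isRightDescent_mul_alternatingWord cs (k := 2) ha hb (by lia)

lemma isRightDescent_mul_simple_mul_simple_mul_simple (hab : a ≠ b) (hM₂ : M a b ≠ 2)
    (hM₃ : M a b ≠ 3) (ha : cs.IsRightDescent z a) (hb : cs.IsRightDescent z b) :
    cs.IsRightDescent (z * cs.simple a * cs.simple b * cs.simple a) b := by
  have hMab : M a b ≠ 1 := M.off_diagonal a b hab
  rw [M.symmetric a b] at hM₂ hM₃ hMab
  simpa [alternatingWord, CoxeterSystem.wordProd_cons, mul_assoc] using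
    isRightDescent_mul_alternatingWord cs (k := 3) hb ha (by lia)

theorem not_isRightDescent_mul_simple_of_complete {z : W} {a b c : B}
    (hM : ∀ i j, M i j ≠ 2) (hab : a ≠ b) (hbc : b ≠ c) (hca : c ≠ a)
    (ha : cs.IsRightDescent z a) (hb : cs.IsRightDescent z b) :
    ¬cs.IsRightDescent (z * cs.simple a) c := fun hc ↦
  not_isRightDescent_mul_simple_of_complete hM hbc hca hab
    (isRightDescent_mul_simple hab ha hb) hc
    (isRightDescent_mul_simple_mul_simple hab (hM a b) ha hb)
termination_by cs.length z
decreasing_by exact ha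

theorem not_isRightDescent_mul_of_notMem (hM : ∀ i j, M i j ≠ 2)
    (hw : ∀ j ∈ J, ¬cs.IsRightDescent w j) (hw' : w' ∈ parabolicSubgroup cs J)
    (hlen : 2 ≤ cs.length w') (hr : r ∉ J) : ¬cs.IsRightDescent (w * w') r := by
  intro hwr
  have hne : w' ≠ 1 := by
    rintro rfl
    simp at hlen
  obtain ⟨a, ha⟩ := cs.exists_rightDescent_of_ne_one hne
  have haJ := mem_of_isRightDescent_of_mem_parabolicSubgroup hw' ha
  obtain ⟨b, hbJ, hba, hb⟩ := exists_isRightDescent_mul_mul_simple hw hw' hlen ha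
  exact not_isRightDescent_mul_simple_of_complete hM (ne_of_mem_of_not_mem haJ hr)
    (ne_of_mem_of_not_mem hbJ hr).symm hba
    ((isRightDescent_mul_iff_of_mem_parabolicSubgroup hw hw' haJ).2 ha) hwr hb

theorem not_isRightDescent_mul_mul_simple (hM : ∀ i j, M i j ≠ 2) (hrf : M r f ≠ 3)
    (hw : ∀ j ∈ J, ¬cs.IsRightDescent w j) (hw' : w' ∈ parabolicSubgroup cs J)
    (hlen : 2 ≤ cs.length w') (hr : r ∉ J) (hf : f ≠ r) :
    ¬cs.IsRightDescent (w * w' * cs.simple r) f := by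
  intro hzf
  have hzr : cs.IsRightDescent (w * w' * cs.simple r) r := by
    rw [cs.isRightDescent_iff_not_isRightDescent_mul, cs.simple_mul_simple_cancel_right]
    exact not_isRightDescent_mul_of_notMem hM hw hw' hlen hr
  have hf_desc : cs.IsRightDescent (w * w') f := by
    simpa using isRightDescent_mul_simple hf.symm hzr hzf
  have hr_desc : cs.IsRightDescent (w * w' * cs.simple f) r := by
    simpa using isRightDescent_mul_simple_mul_simple hf.symm (hM r f) hzr hzf
  have hf_desc' : cs.IsRightDescent (w * w' * cs.simple f * cs.simple r) f := by
    simpa using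
      isRightDescent_mul_simple_mul_simple_mul_simple hf.symm (hM r f) hrf hzr hzf
  have hfJ : f ∈ J := by
    by_contra hfJ
    exact not_isRightDescent_mul_of_notMem hM hw hw' hlen hfJ hf_desc
  obtain ⟨b, hbJ, hbf, hb_desc⟩ := exists_isRightDescent_mul_mul_simple hw hw' hlen
    ((isRightDescent_mul_iff_of_mem_parabolicSubgroup hw hw' hfJ).1 hf_desc)
  exact not_isRightDescent_mul_simple_of_complete hM (ne_of_mem_of_not_mem hbJ hr).symm hbf hf
    hr_desc hb_desc hf_desc'

end CompleteDiagram

end CoxeterGeometry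

open CoxeterGeometry in
theorem stmt11_general {B W : Type*} [Group W] {M : CoxeterMatrix B} (cs : CoxeterSystem M W)
    (hM : ∀ i j : B, M i j ≠ 2) (J : Set B) (w : W) (hw : ∀ j ∈ J, ¬cs.IsRightDescent w j)
    (w' : W) (hw' : w' ∈ parabolicSubgroup cs J) (hlen : 2 ≤ cs.length w')
    (r : B) (hr : r ∉ J) (f : B) (hf : f ≠ r) (hrf : M r f ≠ 3) :
    cs.length (w * w' * cs.simple r * cs.simple f) = cs.length w + cs.length w' + 2 := by
  have hww' := length_mul_of_mem_parabolicSubgroup hw hw'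
  have hwr := cs.not_isRightDescent_iff.1 (not_isRightDescent_mul_of_notMem hM hw hw' hlen hr)
  have hwrf := cs.not_isRightDescent_iff.1
    (not_isRightDescent_mul_mul_simple hM hrf hw hw' hlen hr hf)
  lia

/-- In a 2-spherical Coxeter system whose diagram is the complete graph
with `m_{pq} ≠ 3` for all `p, q` (i.e. `3 < m_{st} < ∞` for all `s ≠ t`):
if `ℓ(ws) = ℓ(w)+1 = ℓ(wt)`, `w' ∈ ⟨s,t⟩` with `ℓ(w') ≥ 2`, then for `r ∉ {s,t}` and
`f ≠ r` we have `ℓ(ww'rf) = ℓ(w) + ℓ(w') + 2`. -/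
theorem stmt11 {B W : Type*} [Group W] {M : CoxeterMatrix B} (cs : CoxeterSystem M W)
    (h2sph : ∀ s t : B, s ≠ t → M.M s t ≠ 0)
    (hgt3 : ∀ s t : B, s ≠ t → 3 < M.M s t)
    (w : W) (s t : B) (hst : s ≠ t)
    (hs : cs.length (w * cs.simple s) = cs.length w + 1)
    (ht : cs.length (w * cs.simple t) = cs.length w + 1)
    (w' : W) (hw' : w' ∈ Subgroup.closure {cs.simple s, cs.simple t})
    (hlen : 2 ≤ cs.length w')
    (r : B) (hrs : r ≠ s) (hrt : r ≠ t) (f : B) (hf : f ≠ r) :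
    cs.length (w * w' * cs.simple r * cs.simple f) = cs.length w + cs.length w' + 2 := by
  have hM (i j : B) : M i j ≠ 2 := by
    obtain rfl | hij := eq_or_ne i j
    · simp
    · exact (Nat.lt_of_succ_lt (hgt3 i j hij)).ne'
  refine stmt11_general cs hM {s, t} w ?_ w' ?_ hlen r (by simp [hrs, hrt]) f hf
    (hgt3 r f hf.symm).ne'
  · simp [cs.not_isRightDescent_iff, hs, ht]
  · rwa [CoxeterGeometry.parabolicSubgroup, Set.image_pair]
end
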